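/- arXiv:2311.00235 — 6 statements merged into one kernel-verified Lean document; each statement's English description precedes it below -/
import Mathlib

section
/- Let L : ℝ^n → ℝ be three times continuously differentiable with bounded first, second and third derivatives. Fix θ₀ ∈ ℝ^n and define the gradient descent iterate θ'(h) = θ₀ − h ∇L(θ₀). For each h > 0 let θ̃_h : [0, h] → ℝ^n be the solution of the modified gradient flow θ̇(t) = −∇L(θ(t)) − (h/4) ∇(‖∇L(θ(t))‖²) with θ̃_h(0) = θ₀. Then there exist constants C > 0 and h₀ > 0 such that for all h ∈ (0, h₀), ‖θ̃_h(h) − θ'(h)‖ ≤ C h³. -/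
open Set

/-- The Riesz isometry as a linear isometry equivalence over the reals. -/
noncomputable def rieszEquiv (n : ℕ) :
    (EuclideanSpace ℝ (Fin n) →L[ℝ] ℝ) ≃ₗᵢ[ℝ] EuclideanSpace ℝ (Fin n) where
  toFun := (InnerProductSpace.toDual ℝ (EuclideanSpace ℝ (Fin n))).symm
  invFun := InnerProductSpace.toDual ℝ (EuclideanSpace ℝ (Fin n))
  left_inv := fun x => by simp
  right_inv := fun x => by simp
  map_add' := fun x y => by simp
  map_smul' := fun c x => by simp
  norm_map' := fun x => by
    exact (InnerProductSpace.toDual ℝ (EuclideanSpace ℝ (Fin n))).symm.norm_map x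

lemma rieszEquiv_inner {n : ℕ} (l : EuclideanSpace ℝ (Fin n) →L[ℝ] ℝ)
    (w : EuclideanSpace ℝ (Fin n)) : inner ℝ (rieszEquiv n l) w = l w :=
  InnerProductSpace.toDual_symm_apply

/-- The analytic core, for a general vector field. -/
lemma drift_core {E : Type*} [NormedAddCommGroup E] [NormedSpace ℝ E]
    (g : E → E) (G : E → E →L[ℝ] E) (hg : ∀ x, HasFDerivAt g (G x) x)
    (K : ℝ) (hK : 0 ≤ K) (b0 : ∀ x, ‖g x‖ ≤ K) (b1 : ∀ x, ‖G x‖ ≤ K)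
    (b2 : ∀ x y, ‖G x - G y‖ ≤ K * ‖x - y‖) (h : ℝ) (h0 : 0 < h) (h1 : h < 1)
    (θ : ℝ → E)
    (hode : ∀ t ∈ Icc (0 : ℝ) h,
      HasDerivAt θ (-(g (θ t)) - (h / 2) • G (θ t) (g (θ t))) t) :
    ‖θ h - (θ 0 - h • g (θ 0))‖ ≤ (3 * K ^ 2 * (K + K ^ 2) + K ^ 3) * h ^ 3 := by
  have bF : ∀ x, ‖G x (g x)‖ ≤ K ^ 2 := fun x => by
    calc ‖G x (g x)‖ ≤ K * K := (G x).le_of_opNorm_le_of_le (b1 x) (b0 x)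
      _ = K ^ 2 := by ring
  have lg : ∀ x y, ‖g x - g y‖ ≤ K * ‖x - y‖ := fun x y =>
    Convex.norm_image_sub_le_of_norm_hasFDerivWithin_le
      (fun z _ => (hg z).hasFDerivWithinAt) (fun z _ => b1 z) convex_univ
      (mem_univ y) (mem_univ x)
  have lF : ∀ x y, ‖G x (g x) - G y (g y)‖ ≤ 2 * K ^ 2 * ‖x - y‖ := fun x y => by
    have e : G x (g x) - G y (g y) = (G x - G y) (g x) + G y (g x - g y) := by
      simp
    rw [e]
    calc _ ≤ (K * ‖x - y‖) * K + K * (K * ‖x - y‖) :=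
          (norm_add_le _ _).trans (add_le_add
            ((G x - G y).le_of_opNorm_le_of_le (b2 x y) (b0 x))
            ((G y).le_of_opNorm_le_of_le (b1 y) (lg x y)))
      _ = _ := by ring
  -- general mean value bound
  have mv : ∀ (f f' : ℝ → E) (C : ℝ), (∀ t ∈ Icc (0 : ℝ) h, HasDerivAt f (f' t) t) →
      0 ≤ C → (∀ t ∈ Icc (0 : ℝ) h, ‖f' t‖ ≤ C) → ∀ t ∈ Icc (0 : ℝ) h, ‖f t - f 0‖ ≤ C * h := by
    intro f f' C hf hC hb t ht
    have := norm_image_sub_le_of_norm_deriv_le_segment'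
      (fun t ht => (hf t ht).hasDerivWithinAt) (fun t ht => hb t (Ico_subset_Icc_self ht)) t ht
    refine this.trans ?_
    have := ht.2
    gcongr
    linarith
  have nh : ∀ v : E, ‖(h / 2) • v‖ = h / 2 * ‖v‖ := fun v => by
    rw [norm_smul, Real.norm_of_nonneg (by positivity)]
  set M := K + K ^ 2 with hM
  have hM0 : 0 ≤ M := by positivity
  have dθ : ∀ t ∈ Icc (0 : ℝ) h, ‖θ t - θ 0‖ ≤ M * h := by
    refine mv θ _ M hode hM0 fun t ht => ?_
    refine (norm_sub_le _ _).trans ?_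
    rw [norm_neg, nh]
    refine add_le_add (b0 _) ?_
    nlinarith [bF (θ t), norm_nonneg (G (θ t) (g (θ t)))]
  have dF : ∀ t ∈ Icc (0 : ℝ) h,
      ‖G (θ t) (g (θ t)) - G (θ 0) (g (θ 0))‖ ≤ 2 * K ^ 2 * (M * h) := fun t ht =>
    (lF _ _).trans (by have := dθ t ht; gcongr)
  have dq : ∀ t ∈ Icc (0 : ℝ) h,
      ‖g (θ t) - g (θ 0) + t • G (θ 0) (g (θ 0))‖ ≤ (2 * K ^ 2 * M + K ^ 3) * h * h := by
    intro t ht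
    have := mv (fun t => g (θ t) + t • G (θ 0) (g (θ 0)))
      (fun t => G (θ t) (-(g (θ t)) - (h / 2) • G (θ t) (g (θ t)))
        + (1 : ℝ) • G (θ 0) (g (θ 0))) ((2 * K ^ 2 * M + K ^ 3) * h)
      (fun t ht => ((hg (θ t)).comp_hasDerivAt t (hode t ht)).add
        ((hasDerivAt_id t).smul_const _)) (by positivity) (fun t ht => by
          have e : G (θ t) (-(g (θ t)) - (h / 2) • G (θ t) (g (θ t)))
              + (1 : ℝ) • G (θ 0) (g (θ 0))
              = -(G (θ t) (g (θ t)) - G (θ 0) (g (θ 0)))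
                - (h / 2) • G (θ t) (G (θ t) (g (θ t))) := by
            rw [map_sub, map_neg, map_smul, one_smul]; abel
          simp only [e]
          refine (norm_sub_le _ _).trans ?_
          rw [norm_neg, nh]
          have h2 := (G (θ t)).le_of_opNorm_le_of_le (b1 _) (bF (θ t))
          have h3 := dF t ht
          have h4 : h / 2 * ‖G (θ t) (G (θ t) (g (θ t)))‖ ≤ h / 2 * (K * K ^ 2) := by gcongr
          have h5 : 0 ≤ K ^ 3 * h := by positivity
          nlinarith) t ht
    convert this using 2
    simp only [zero_smul, add_zero]; abel
  have fin := mv (fun t => θ t + t • (g (θ 0) + (h / 2) • G (θ 0) (g (θ 0)))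
      - (t ^ 2 / 2) • G (θ 0) (g (θ 0)))
    (fun t => (-(g (θ t)) - (h / 2) • G (θ t) (g (θ t)))
      + (1 : ℝ) • (g (θ 0) + (h / 2) • G (θ 0) (g (θ 0))) - t • G (θ 0) (g (θ 0)))
    ((3 * K ^ 2 * M + K ^ 3) * h ^ 2)
    (fun t ht => ((hode t ht).add ((hasDerivAt_id t).smul_const _)).sub
      (HasDerivAt.smul_const (by
        have := ((hasDerivAt_id t).pow 2).div_const 2
        simpa using this) _)) (by positivity) (fun t ht => by
          have e : (-(g (θ t)) - (h / 2) • G (θ t) (g (θ t)))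
              + (1 : ℝ) • (g (θ 0) + (h / 2) • G (θ 0) (g (θ 0))) - t • G (θ 0) (g (θ 0))
              = -(g (θ t) - g (θ 0) + t • G (θ 0) (g (θ 0)))
                - (h / 2) • (G (θ t) (g (θ t)) - G (θ 0) (g (θ 0))) := by
            module
          simp only [e]
          refine (norm_sub_le _ _).trans ?_
          rw [norm_neg, nh]
          have h4 : h / 2 * ‖G (θ t) (g (θ t)) - G (θ 0) (g (θ 0))‖
              ≤ h / 2 * (2 * K ^ 2 * (M * h)) := by
            have := dF t ht
            gcongr
          have := dq t ht
          nlinarith) h ⟨h0.le, le_rfl⟩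
  have e : θ h - (θ 0 - h • g (θ 0)) = (θ h + h • (g (θ 0) + (h / 2) • G (θ 0) (g (θ 0)))
      - (h ^ 2 / 2) • G (θ 0) (g (θ 0))) - (θ 0 + (0 : ℝ) • (g (θ 0) + (h / 2) • G (θ 0) (g (θ 0)))
      - ((0 : ℝ) ^ 2 / 2) • G (θ 0) (g (θ 0))) := by
    module
  rw [e]
  refine fin.trans (le_of_eq ?_)
  ring

/-- **Backward error analysis for a single gradient descent step.**
If `L : ℝⁿ → ℝ` is C³ with bounded first, second and third derivatives, `θ'` is the
gradient descent iterate `θ₀ - h ∇L(θ₀)`, and for each `h > 0` the curve `θt h` solves the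
modified gradient flow `θ̇ = -∇L(θ) - (h/4) ∇(‖∇L(θ)‖²)` with initial condition `θ₀`,
then the discretization drift `‖θt h h - θ' h‖` is of order `O(h³)`. -/
theorem single_step_modified_flow_drift {n : ℕ}
    (L : EuclideanSpace ℝ (Fin n) → ℝ)
    (hL : ContDiff ℝ 3 L)
    (K : ℝ)
    (hbound : ∀ i : ℕ, 1 ≤ i → i ≤ 3 → ∀ x, ‖iteratedFDeriv ℝ i L x‖ ≤ K)
    (θ₀ : EuclideanSpace ℝ (Fin n))
    (θ' : ℝ → EuclideanSpace ℝ (Fin n))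
    (hθ' : ∀ h : ℝ, θ' h = θ₀ - h • gradient L θ₀)
    (θt : ℝ → ℝ → EuclideanSpace ℝ (Fin n))
    (hinit : ∀ h : ℝ, 0 < h → θt h 0 = θ₀)
    (hode : ∀ h : ℝ, 0 < h → ∀ t ∈ Icc (0 : ℝ) h,
      HasDerivAt (θt h)
        (-(gradient L (θt h t))
          - (h / 4) • gradient (fun θ => ‖gradient L θ‖ ^ 2) (θt h t)) t) :
    ∃ C > (0 : ℝ), ∃ h₀ > (0 : ℝ), ∀ h ∈ Ioo (0 : ℝ) h₀,
      ‖θt h h - θ' h‖ ≤ C * h ^ 3 := by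
  have hgr : gradient L = rieszEquiv n ∘ fderiv ℝ L := rfl
  have cL : ContDiff ℝ 2 (fderiv ℝ L) := hL.fderiv_right (by norm_num)
  have cg : ContDiff ℝ 2 (gradient L) := by
    rw [hgr]; exact (rieszEquiv n).contDiff.comp cL
  have nb : ∀ i : ℕ, i ≤ 2 → ∀ x, ‖iteratedFDeriv ℝ i (gradient L) x‖ ≤ K := fun i hi x => by
    rw [hgr, LinearIsometryEquiv.norm_iteratedFDeriv_comp_left, norm_iteratedFDeriv_fderiv]
    exact hbound (i + 1) (by omega) (by omega) x
  have hg : ∀ x, HasFDerivAt (gradient L) (fderiv ℝ (gradient L) x) x := fun x =>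
    (cg.differentiable (by norm_num) x).hasFDerivAt
  have cG : ContDiff ℝ 1 (fderiv ℝ (gradient L)) := cg.fderiv_right (by norm_num)
  have b0 : ∀ x, ‖gradient L x‖ ≤ K := fun x => by
    simpa using nb 0 (by norm_num) x
  have hK : 0 ≤ K := (norm_nonneg _).trans (b0 θ₀)
  have b1 : ∀ x, ‖fderiv ℝ (gradient L) x‖ ≤ K := fun x => by
    have := nb 1 (by norm_num) x
    rwa [← norm_iteratedFDeriv_fderiv, norm_iteratedFDeriv_zero] at this
  have b2 : ∀ x y, ‖fderiv ℝ (gradient L) x - fderiv ℝ (gradient L) y‖ ≤ K * ‖x - y‖ :=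
    fun x y => Convex.norm_image_sub_le_of_norm_fderiv_le
      (fun z _ => cG.differentiable (by norm_num) z) (fun z _ => by
        have := nb 2 (by norm_num) z
        rwa [← norm_iteratedFDeriv_fderiv, ← norm_iteratedFDeriv_fderiv,
          norm_iteratedFDeriv_zero] at this) convex_univ (mem_univ y) (mem_univ x)
  have hG : ∀ x v w, inner ℝ (fderiv ℝ (gradient L) x v) w = fderiv ℝ (fderiv ℝ L) x v w := by
    intro x v w
    have : HasFDerivAt (gradient L) ((rieszEquiv n : (EuclideanSpace ℝ (Fin n) →L[ℝ] ℝ) →L[ℝ]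
        EuclideanSpace ℝ (Fin n)).comp (fderiv ℝ (fderiv ℝ L) x)) x :=
      ((rieszEquiv n : (EuclideanSpace ℝ (Fin n) →L[ℝ] ℝ) →L[ℝ]
        EuclideanSpace ℝ (Fin n)).hasFDerivAt).comp x
        (cL.differentiable (by norm_num) x).hasFDerivAt
    rw [this.fderiv]
    exact rieszEquiv_inner _ _
  have hsym : ∀ x v w, fderiv ℝ (fderiv ℝ L) x v w = fderiv ℝ (fderiv ℝ L) x w v := by
    intro x v w
    exact (hL.contDiffAt.isSymmSndFDerivAt (by simp; norm_num)).eq v w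
  have hgn : ∀ x, gradient (fun θ => ‖gradient L θ‖ ^ 2) x
      = (2 : ℝ) • fderiv ℝ (gradient L) x (gradient L x) := by
    intro x
    refine HasGradientAt.gradient ?_
    rw [hasGradientAt_iff_hasFDerivAt]
    have e : InnerProductSpace.toDual ℝ (EuclideanSpace ℝ (Fin n))
        ((2 : ℝ) • fderiv ℝ (gradient L) x (gradient L x))
        = 2 • (innerSL ℝ (gradient L x)).comp (fderiv ℝ (gradient L) x) := by
      refine ContinuousLinearMap.ext fun v => ?_
      rw [InnerProductSpace.toDual_apply_apply, real_inner_smul_left,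
        hG, hsym, ← hG, real_inner_comm]
      simp [two_mul, two_smul]
    rw [e]
    exact (hg x).norm_sq
  refine ⟨3 * K ^ 2 * (K + K ^ 2) + K ^ 3 + 1, by positivity, 1, one_pos, ?_⟩
  rintro h ⟨h0, h1⟩
  have := drift_core (gradient L) (fderiv ℝ (gradient L)) hg K hK b0 b1 b2 h h0 h1 (θt h)
    (fun t ht => by
      have e := hode h h0 t ht
      rw [hgn, smul_smul, show h / 4 * 2 = h / 2 by ring] at e
      exact e)
  rw [hinit h h0, ← hθ'] at this
  refine this.trans ?_
  exact mul_le_mul_of_nonneg_right (by linarith) (by positivity)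
end

section
/- Let L : ℝ^n → ℝ be three times continuously differentiable with bounded derivatives, fix θ₀ ∈ ℝ^n, and for h > 0 and a continuously differentiable vector field f₁ : ℝ^n → ℝ^n with bounded derivative, let θ̃_h solve the ODE θ̇(t) = −∇L(θ(t)) + h f₁(θ(t)) with θ̃_h(0) = θ₀. Then θ̃_h(h) = θ₀ − h ∇L(θ₀) + h² ( f₁(θ₀) + (1/4) ∇(‖∇L‖²)(θ₀) ) + R(h), where the remainder satisfies ‖R(h)‖ ≤ C h³ for some constant C > 0 and all sufficiently small h > 0. -/
open Set

/-- The linear isometry from the dual back to the space (real Riesz map). -/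
noncomputable def rieszInv (n : ℕ) :
    (EuclideanSpace ℝ (Fin n) →L[ℝ] ℝ) ≃ₗᵢ[ℝ] EuclideanSpace ℝ (Fin n) where
  toFun := fun l => (InnerProductSpace.toDual ℝ (EuclideanSpace ℝ (Fin n))).symm l
  invFun := fun x => InnerProductSpace.toDual ℝ (EuclideanSpace ℝ (Fin n)) x
  map_add' := by intro x y; simp
  map_smul' := by intro c x; simp
  left_inv := by intro x; simp
  right_inv := by intro x; simp
  norm_map' := by intro x; exact LinearIsometryEquiv.norm_map _ _

lemma rieszInv_inner {n : ℕ} (l : EuclideanSpace ℝ (Fin n) →L[ℝ] ℝ)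
    (x : EuclideanSpace ℝ (Fin n)) : inner ℝ (rieszInv n l) x = l x :=
  InnerProductSpace.toDual_symm_apply

lemma gradient_eq_rieszInv {n : ℕ} (L : EuclideanSpace ℝ (Fin n) → ℝ) :
    gradient L = rieszInv n ∘ fderiv ℝ L := rfl

/-- Gradient of the squared gradient norm. -/
lemma gradient_norm_sq {n : ℕ} (L : EuclideanSpace ℝ (Fin n) → ℝ) (hL : ContDiff ℝ 3 L)
    (x : EuclideanSpace ℝ (Fin n)) :
    gradient (fun θ => ‖gradient L θ‖ ^ 2) x
      = (2 : ℝ) • fderiv ℝ (gradient L) x (gradient L x) := by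
  have hd : ContDiff ℝ 2 (fderiv ℝ L) := hL.fderiv_right (by norm_num)
  have hdd : HasFDerivAt (fderiv ℝ L) (fderiv ℝ (fderiv ℝ L) x) x :=
    (hd.differentiable (by norm_num) x).hasFDerivAt
  have hg : HasFDerivAt (gradient L)
      (((rieszInv n).toContinuousLinearEquiv :
        (EuclideanSpace ℝ (Fin n) →L[ℝ] ℝ) →L[ℝ] EuclideanSpace ℝ (Fin n)).comp
        (fderiv ℝ (fderiv ℝ L) x)) x := by
    rw [gradient_eq_rieszInv]
    exact ((rieszInv n).toContinuousLinearEquiv.hasFDerivAt).comp x hdd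
  have happ : ∀ v w, inner ℝ (fderiv ℝ (gradient L) x v) w = fderiv ℝ (fderiv ℝ L) x v w := by
    intro v w
    rw [hg.fderiv]
    exact rieszInv_inner _ _
  have hsymm : IsSymmSndFDerivAt ℝ L x :=
    hL.contDiffAt.isSymmSndFDerivAt (by simp; norm_num)
  have hsq := hg.differentiableAt.hasFDerivAt.norm_sq
  refine ext_inner_right ℝ fun w => ?_
  have h1 : inner ℝ (gradient (fun θ => ‖gradient L θ‖ ^ 2) x) w
      = fderiv ℝ (fun θ => ‖gradient L θ‖ ^ 2) x w := rieszInv_inner _ _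
  rw [h1, hsq.fderiv, inner_smul_left, happ, hsymm.eq, ← happ, real_inner_comm]
  simp

/-- The quantitative expansion for a single step. -/
lemma core_expansion {E : Type*} [NormedAddCommGroup E] [NormedSpace ℝ E]
    (g f : E → E) (A : E →L[ℝ] E) (K M : ℝ) (hK : 0 ≤ K) (hM : 0 ≤ M) (x₀ : E)
    (hg0 : ∀ x, ‖g x‖ ≤ K) (hgl : ∀ x, ‖g x - g x₀‖ ≤ K * ‖x - x₀‖)
    (hgt : ∀ x, ‖g x - g x₀ - A (x - x₀)‖ ≤ K * ‖x - x₀‖ * ‖x - x₀‖)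
    (hA : ∀ v, ‖A v‖ ≤ K * ‖v‖) (hf : ∀ x, ‖f x - f x₀‖ ≤ M * ‖x - x₀‖) :
    ∃ C > (0 : ℝ), ∀ h ∈ Ioo (0 : ℝ) 1, ∀ θ : ℝ → E, θ 0 = x₀ →
      (∀ t ∈ Icc (0 : ℝ) h, HasDerivAt θ (-(g (θ t)) + h • f (θ t)) t) →
      ‖θ h - (x₀ - h • g x₀ + h ^ 2 • (f x₀ + (1 / 2 : ℝ) • A (g x₀)))‖ ≤ C * h ^ 3 := by
  set F := ‖f x₀‖ with hF
  have hF0 : 0 ≤ F := norm_nonneg _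
  have hff : ∀ x, ‖f x‖ ≤ F + M * ‖x - x₀‖ := by
    intro x
    have h1 : f x = f x₀ + (f x - f x₀) := by abel
    calc ‖f x‖ = ‖f x₀ + (f x - f x₀)‖ := by rw [← h1]
      _ ≤ _ := (norm_add_le _ _).trans (by gcongr; exact hf x)
  set B := gronwallBound 0 M (K + F) 1 with hB
  have hB0 : 0 ≤ B := by
    have := gronwallBound_mono (le_refl 0) (add_nonneg hK hF0) hM (zero_le_one (α := ℝ))
    rwa [gronwallBound_x0] at this
  set a := K + F + M * B with ha
  have ha0 : 0 ≤ a := by positivity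
  set D := K * a + F + M * a with hD
  have hD0 : 0 ≤ D := by positivity
  refine ⟨K * a * a + K * D + M * a + 1, by positivity, ?_⟩
  rintro h ⟨hh0, hh1⟩ θ hθ0 hθ
  have hw : ∀ t ∈ Icc (0 : ℝ) h,
      HasDerivWithinAt θ (-(g (θ t)) + h • f (θ t)) (Icc 0 h) t :=
    fun t ht => (hθ t ht).hasDerivWithinAt
  have hv : ∀ t, ‖-(g (θ t)) + h • f (θ t)‖ ≤ M * ‖θ t - x₀‖ + (K + F) := by
    intro t
    calc _ ≤ ‖-(g (θ t))‖ + ‖h • f (θ t)‖ := norm_add_le _ _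
      _ ≤ K + 1 * (F + M * ‖θ t - x₀‖) := by
          rw [norm_neg, norm_smul, Real.norm_of_nonneg hh0.le]
          gcongr
          · exact hg0 _
          · exact hff _
      _ = _ := by ring
  have hbd : ∀ t ∈ Icc (0 : ℝ) h, ‖θ t - x₀‖ ≤ B := by
    intro t ht
    have := norm_le_gronwallBound_of_norm_deriv_right_le (f := fun t => θ t - x₀)
      (f' := fun t => -(g (θ t)) + h • f (θ t)) (δ := 0) (K := M) (ε := K + F) (a := 0) (b := h)
      (fun t ht => ((hθ t ht).continuousAt.sub continuousAt_const).continuousWithinAt)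
      (fun t ht => ((hθ t (Ico_subset_Icc_self ht)).sub_const _).hasDerivWithinAt)
      (by simp [hθ0]) (fun t _ => hv t) t ht
    refine this.trans ?_
    exact gronwallBound_mono (le_refl 0) (add_nonneg hK hF0) hM (by linarith [ht.2])
  have hlin : ∀ t ∈ Icc (0 : ℝ) h, ‖θ t - x₀‖ ≤ a * h := by
    intro t ht
    have := norm_image_sub_le_of_norm_deriv_le_segment' (C := a) hw (fun t ht => by
      refine (hv t).trans ?_
      have := mul_le_mul_of_nonneg_left (hbd t (Ico_subset_Icc_self ht)) hM
      linarith) t ht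
    rw [hθ0] at this
    exact this.trans (by gcongr; linarith [ht.2])
  have hlin1 : ∀ t ∈ Icc (0 : ℝ) h, ‖θ t - x₀‖ ≤ a := fun t ht =>
    (hlin t ht).trans (by nlinarith)
  have hquad : ∀ t ∈ Icc (0 : ℝ) h, ‖θ t - x₀ + t • g x₀‖ ≤ D * h * h := by
    intro t ht
    have hd : ∀ t ∈ Icc (0 : ℝ) h, HasDerivWithinAt (fun t => θ t + t • g x₀)
        ((-(g (θ t)) + h • f (θ t)) + (1 : ℝ) • g x₀) (Icc 0 h) t :=
      fun t ht => (hw t ht).add ((hasDerivWithinAt_id t _).smul_const _)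
    have := norm_image_sub_le_of_norm_deriv_le_segment' (C := D * h) hd (fun t ht => by
      have ht' := Ico_subset_Icc_self ht
      have e : -(g (θ t)) + h • f (θ t) + (1 : ℝ) • g x₀
          = -(g (θ t) - g x₀) + h • f (θ t) := by module
      rw [e]
      calc _ ≤ ‖-(g (θ t) - g x₀)‖ + ‖h • f (θ t)‖ := norm_add_le _ _
        _ ≤ K * (a * h) + h * (F + M * a) := by
          rw [norm_neg, norm_smul, Real.norm_of_nonneg hh0.le]
          gcongr
          · exact (hgl _).trans (by gcongr; exact hlin t ht')
          · exact (hff _).trans (by gcongr; exact hlin1 t ht')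
        _ = D * h := by rw [hD]; ring) t ht
    have e : θ t + t • g x₀ - (θ 0 + (0 : ℝ) • g x₀) = θ t - x₀ + t • g x₀ := by
      rw [hθ0]; module
    rw [e] at this
    exact this.trans (by gcongr; linarith [ht.2])
  have hd : ∀ t ∈ Icc (0 : ℝ) h, HasDerivWithinAt
      (fun t => θ t + t • (g x₀ - h • f x₀) - (t ^ 2) • ((1 / 2 : ℝ) • A (g x₀)))
      ((-(g (θ t)) + h • f (θ t)) + (1 : ℝ) • (g x₀ - h • f x₀)
        - (2 * t) • ((1 / 2 : ℝ) • A (g x₀))) (Icc 0 h) t := by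
    intro t ht
    have h2 : HasDerivWithinAt (fun t : ℝ => t ^ 2) (2 * t) (Icc 0 h) t := by
      simpa using (hasDerivAt_pow 2 t).hasDerivWithinAt
    exact ((hw t ht).add ((hasDerivWithinAt_id t _).smul_const _)).sub (h2.smul_const _)
  have := norm_image_sub_le_of_norm_deriv_le_segment'
    (C := (K * a * a + K * D + M * a) * h ^ 2) hd (fun t ht => by
      have ht' := Ico_subset_Icc_self ht
      have e : (-(g (θ t)) + h • f (θ t)) + (1 : ℝ) • (g x₀ - h • f x₀)
          - (2 * t) • ((1 / 2 : ℝ) • A (g x₀))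
          = -(g (θ t) - g x₀ - A (θ t - x₀)) - A (θ t - x₀ + t • g x₀)
            + h • (f (θ t) - f x₀) := by
        rw [map_add, map_smul]; module
      rw [e]
      calc _ ≤ ‖-(g (θ t) - g x₀ - A (θ t - x₀))‖ + ‖A (θ t - x₀ + t • g x₀)‖
            + ‖h • (f (θ t) - f x₀)‖ :=
            (norm_add_le _ _).trans (by gcongr; exact norm_sub_le _ _)
        _ ≤ K * (a * h) * (a * h) + K * (D * h * h) + h * (M * (a * h)) := by
          rw [norm_neg, norm_smul, Real.norm_of_nonneg hh0.le]
          gcongr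
          · exact (hgt _).trans (by gcongr <;> exact hlin t ht')
          · exact (hA _).trans (by gcongr; exact hquad t ht')
          · exact (hf _).trans (by gcongr; exact hlin t ht')
        _ = _ := by ring) h ⟨hh0.le, le_refl h⟩
  have e : θ h + h • (g x₀ - h • f x₀) - (h ^ 2) • ((1 / 2 : ℝ) • A (g x₀))
      - (θ 0 + (0 : ℝ) • (g x₀ - h • f x₀) - ((0 : ℝ) ^ 2) • ((1 / 2 : ℝ) • A (g x₀)))
      = θ h - (x₀ - h • g x₀ + h ^ 2 • (f x₀ + (1 / 2 : ℝ) • A (g x₀))) := by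
    rw [hθ0]; module
  rw [e] at this
  refine this.trans ?_
  have : 0 ≤ h ^ 3 := by positivity
  nlinarith

/-- **Second-order Taylor expansion of the modified-equation solution.**
If `L : ℝⁿ → ℝ` is C³ with bounded derivatives, `f₁` is a C¹ vector field with bounded
derivative, and for each `h > 0` the curve `θt h` solves `θ̇ = -∇L(θ) + h f₁(θ)` with
`θt h 0 = θ₀`, then
`θt h h = θ₀ - h ∇L(θ₀) + h² (f₁(θ₀) + (1/4) ∇(‖∇L‖²)(θ₀)) + O(h³)`. -/
theorem modified_equation_solution_expansion {n : ℕ}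
    (L : EuclideanSpace ℝ (Fin n) → ℝ)
    (hL : ContDiff ℝ 3 L)
    (K : ℝ)
    (hbound : ∀ i : ℕ, 1 ≤ i → i ≤ 3 → ∀ x, ‖iteratedFDeriv ℝ i L x‖ ≤ K)
    (f₁ : EuclideanSpace ℝ (Fin n) → EuclideanSpace ℝ (Fin n))
    (hf₁ : ContDiff ℝ 1 f₁)
    (Kf : ℝ)
    (hbf : ∀ x, ‖fderiv ℝ f₁ x‖ ≤ Kf)
    (θ₀ : EuclideanSpace ℝ (Fin n))
    (θt : ℝ → ℝ → EuclideanSpace ℝ (Fin n))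
    (hinit : ∀ h : ℝ, 0 < h → θt h 0 = θ₀)
    (hode : ∀ h : ℝ, 0 < h → ∀ t ∈ Icc (0 : ℝ) h,
      HasDerivAt (θt h) (-(gradient L (θt h t)) + h • f₁ (θt h t)) t) :
    ∃ C > (0 : ℝ), ∃ h₀ > (0 : ℝ), ∀ h ∈ Ioo (0 : ℝ) h₀,
      ‖θt h h -
          (θ₀ - h • gradient L θ₀
            + h ^ 2 • (f₁ θ₀
              + (1 / 4 : ℝ) • gradient (fun θ => ‖gradient L θ‖ ^ 2) θ₀))‖
        ≤ C * h ^ 3 := by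
  have hd : ContDiff ℝ 2 (fderiv ℝ L) := hL.fderiv_right (by norm_num)
  have hg : ContDiff ℝ 2 (gradient L) := by
    rw [gradient_eq_rieszInv]
    exact (rieszInv n).toContinuousLinearEquiv.contDiff.comp hd
  have hgd : ContDiff ℝ 1 (fderiv ℝ (gradient L)) := hg.fderiv_right (by norm_num)
  have hgi : ∀ i ≤ 2, ∀ x, ‖iteratedFDeriv ℝ i (gradient L) x‖ ≤ K := by
    intro i hi x
    rw [gradient_eq_rieszInv, LinearIsometryEquiv.norm_iteratedFDeriv_comp_left,
      norm_iteratedFDeriv_fderiv]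
    exact hbound (i + 1) (by omega) (by omega) x
  have hg0 : ∀ x, ‖gradient L x‖ ≤ K := fun x => by
    simpa using hgi 0 (by norm_num) x
  have hg1 : ∀ x, ‖fderiv ℝ (gradient L) x‖ ≤ K := fun x => by
    rw [← norm_iteratedFDeriv_one]; exact hgi 1 (by norm_num) x
  have hg2 : ∀ x, ‖fderiv ℝ (fderiv ℝ (gradient L)) x‖ ≤ K := fun x => by
    rw [← norm_iteratedFDeriv_one, norm_iteratedFDeriv_fderiv]; exact hgi 2 le_rfl x
  have hK : 0 ≤ K := (norm_nonneg _).trans (hg0 θ₀)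
  have hM : 0 ≤ Kf := (norm_nonneg _).trans (hbf θ₀)
  have hgdl : ∀ x, ‖fderiv ℝ (gradient L) x - fderiv ℝ (gradient L) θ₀‖ ≤ K * ‖x - θ₀‖ := fun x =>
    convex_univ.norm_image_sub_le_of_norm_fderiv_le (𝕜 := ℝ)
      (fun y _ => hgd.differentiable (by norm_num) y) (fun y _ => hg2 y) (mem_univ _) (mem_univ _)
  obtain ⟨C, hC, hcore⟩ := core_expansion (gradient L) f₁ (fderiv ℝ (gradient L) θ₀) K Kf hK hM θ₀
    hg0
    (fun x => convex_univ.norm_image_sub_le_of_norm_fderiv_le (𝕜 := ℝ)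
      (fun y _ => hg.differentiable (by norm_num) y) (fun y _ => hg1 y) (mem_univ _) (mem_univ _))
    (fun x => (convex_closedBall θ₀ ‖x - θ₀‖).norm_image_sub_le_of_norm_fderiv_le' (𝕜 := ℝ)
      (fun y _ => hg.differentiable (by norm_num) y)
      (fun y hy => (hgdl y).trans
        (mul_le_mul_of_nonneg_left (mem_closedBall_iff_norm.mp hy) hK))
      (by simp) (by simp [dist_eq_norm]))
    (fun v => ((fderiv ℝ (gradient L) θ₀).le_opNorm v).trans (by gcongr; exact hg1 _))
    (fun x => convex_univ.norm_image_sub_le_of_norm_fderiv_le (𝕜 := ℝ)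
      (fun y _ => hf₁.differentiable (by norm_num) y) (fun y _ => hbf y) (mem_univ _) (mem_univ _))
  refine ⟨C, hC, 1, one_pos, fun h hh => ?_⟩
  have := hcore h hh (θt h) (hinit h hh.1) (hode h hh.1)
  rw [gradient_norm_sq L hL, smul_smul]
  norm_num at this ⊢
  exact this
end

section
/- Let H₀ : ℝ^n → ℝ^n be twice continuously differentiable with bounded derivatives and H₁ : ℝ^n → ℝ^n continuously differentiable with bounded derivative. Fix θ₀ ∈ ℝ^n and for each h > 0 let θ_h solve the ODE θ̇(t) = H₀(θ(t)) + h H₁(θ(t)) with θ_h(0) = θ₀. Then θ_h(h) = θ₀ + h H₀(θ₀) + h² ( H₁(θ₀) + (1/2) DH₀(θ₀) H₀(θ₀) ) + R(h), where DH₀(θ₀) is the Jacobian of H₀ at θ₀ and ‖R(h)‖ ≤ C h³ for some constant C > 0 and all sufficiently small h > 0. -/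
open Set

/-- **Taylor expansion of the solution of a generic modified equation.**
If `H₀ : ℝⁿ → ℝⁿ` is C² with bounded derivatives, `H₁` is C¹ with bounded derivative,
and for each `h > 0` the curve `θt h` solves `θ̇ = H₀(θ) + h H₁(θ)` with `θt h 0 = θ₀`,
then `θt h h = θ₀ + h H₀(θ₀) + h² (H₁(θ₀) + (1/2) DH₀(θ₀) H₀(θ₀)) + O(h³)`. -/
theorem generic_modified_equation_expansion {n : ℕ}
    (H₀ H₁ : EuclideanSpace ℝ (Fin n) → EuclideanSpace ℝ (Fin n))
    (hH₀ : ContDiff ℝ 2 H₀)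
    (K₀ : ℝ)
    (hb₀ : ∀ i : ℕ, 1 ≤ i → i ≤ 2 → ∀ x, ‖iteratedFDeriv ℝ i H₀ x‖ ≤ K₀)
    (hH₁ : ContDiff ℝ 1 H₁)
    (K₁ : ℝ)
    (hb₁ : ∀ x, ‖fderiv ℝ H₁ x‖ ≤ K₁)
    (θ₀ : EuclideanSpace ℝ (Fin n))
    (θt : ℝ → ℝ → EuclideanSpace ℝ (Fin n))
    (hinit : ∀ h : ℝ, 0 < h → θt h 0 = θ₀)
    (hode : ∀ h : ℝ, 0 < h → ∀ t ∈ Icc (0 : ℝ) h,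
      HasDerivAt (θt h) (H₀ (θt h t) + h • H₁ (θt h t)) t) :
    ∃ C > (0 : ℝ), ∃ h₀ > (0 : ℝ), ∀ h ∈ Ioo (0 : ℝ) h₀,
      ‖θt h h -
          (θ₀ + h • H₀ θ₀
            + h ^ 2 • (H₁ θ₀ + (1 / 2 : ℝ) • fderiv ℝ H₀ θ₀ (H₀ θ₀)))‖
        ≤ C * h ^ 3 := by
  have hK : 0 ≤ K₀ := (norm_nonneg _).trans (hb₀ 1 le_rfl (by norm_num) θ₀)
  have hK1 : 0 ≤ K₁ := (norm_nonneg _).trans (hb₁ θ₀)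
  have hd0 : ∀ x, ‖fderiv ℝ H₀ x‖ ≤ K₀ := fun x => by
    simpa only [norm_iteratedFDeriv_one] using hb₀ 1 le_rfl (by norm_num) x
  have hdd0 : ∀ x, ‖fderiv ℝ (fderiv ℝ H₀) x‖ ≤ K₀ := fun x => by
    have := hb₀ 2 (by norm_num) le_rfl x
    rwa [← norm_iteratedFDeriv_one, norm_iteratedFDeriv_fderiv]
  have hdiff0 : Differentiable ℝ H₀ := hH₀.differentiable (by norm_num)
  have hdiff1 : Differentiable ℝ H₁ := hH₁.differentiable (by norm_num)
  have hdiffd : Differentiable ℝ (fderiv ℝ H₀) :=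
    (hH₀.fderiv_right (m := 1) (by norm_num)).differentiable (by norm_num)
  have lip0 : ∀ x, ‖H₀ x - H₀ θ₀‖ ≤ K₀ * ‖x - θ₀‖ := fun x =>
    convex_univ.norm_image_sub_le_of_norm_fderiv_le (fun z _ => hdiff0 z)
      (fun z _ => hd0 z) (mem_univ _) (mem_univ _)
  have lip1 : ∀ x, ‖H₁ x - H₁ θ₀‖ ≤ K₁ * ‖x - θ₀‖ := fun x =>
    convex_univ.norm_image_sub_le_of_norm_fderiv_le (fun z _ => hdiff1 z)
      (fun z _ => hb₁ z) (mem_univ _) (mem_univ _)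
  have lipd : ∀ x, ‖fderiv ℝ H₀ x - fderiv ℝ H₀ θ₀‖ ≤ K₀ * ‖x - θ₀‖ := fun x =>
    convex_univ.norm_image_sub_le_of_norm_fderiv_le (fun z _ => hdiffd z)
      (fun z _ => hdd0 z) (mem_univ _) (mem_univ _)
  have tay : ∀ x, ‖H₀ x - H₀ θ₀ - fderiv ℝ H₀ θ₀ (x - θ₀)‖ ≤ K₀ * ‖x - θ₀‖ ^ 2 := fun x => by
    have := (convex_closedBall θ₀ ‖x - θ₀‖).norm_image_sub_le_of_norm_fderiv_le'
      (f := H₀) (𝕜 := ℝ) (φ := fderiv ℝ H₀ θ₀) (C := K₀ * ‖x - θ₀‖) (x := θ₀) (y := x)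
      (fun z _ => hdiff0 z)
      (fun z hz => (lipd z).trans (mul_le_mul_of_nonneg_left (by
        rwa [mem_closedBall_iff_norm] at hz) hK))
      (Metric.mem_closedBall_self (norm_nonneg _)) (by rw [mem_closedBall_iff_norm])
    calc _ ≤ _ := this
      _ = _ := by ring
  set M : ℝ := ‖H₀ θ₀‖ + ‖H₁ θ₀‖ with hM
  have hM0 : 0 ≤ M := by positivity
  set B : ℝ := gronwallBound 0 (K₀ + K₁) M 1 with hB
  have hBmono : ∀ t ≤ (1 : ℝ), gronwallBound 0 (K₀ + K₁) M t ≤ B := fun t ht =>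
    gronwallBound_mono le_rfl hM0 (by positivity) ht
  have hB0 : 0 ≤ B := by
    have := hBmono 0 (by norm_num)
    rwa [gronwallBound_x0] at this
  set A : ℝ := (K₀ + K₁) * B + M with hA
  have hA0 : 0 ≤ A := by positivity
  set D : ℝ := K₀ * A + K₁ * A + M with hD
  have hD0 : 0 ≤ D := by positivity
  set C : ℝ := K₀ * A ^ 2 + K₁ * A + K₀ * D with hC
  have hC0 : 0 ≤ C := by positivity
  refine ⟨C + 1, by positivity, 1, one_pos, ?_⟩
  rintro h ⟨hh, hh1⟩
  have ode := hode h hh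
  have init := hinit h hh
  generalize θt h = θ at ode init
  have vb : ∀ x, ‖H₀ x + h • H₁ x‖ ≤ (K₀ + K₁) * ‖x - θ₀‖ + M := fun x => by
    have h0 : ‖H₀ x‖ ≤ K₀ * ‖x - θ₀‖ + ‖H₀ θ₀‖ := by
      have := norm_add_le (H₀ x - H₀ θ₀) (H₀ θ₀)
      rw [sub_add_cancel] at this
      linarith [lip0 x]
    have h1 : ‖H₁ x‖ ≤ K₁ * ‖x - θ₀‖ + ‖H₁ θ₀‖ := by
      have := norm_add_le (H₁ x - H₁ θ₀) (H₁ θ₀)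
      rw [sub_add_cancel] at this
      linarith [lip1 x]
    have h2 : ‖h • H₁ x‖ ≤ ‖H₁ x‖ := by
      rw [norm_smul, Real.norm_of_nonneg hh.le]
      exact mul_le_of_le_one_left (norm_nonneg _) hh1.le
    have := norm_add_le (H₀ x) (h • H₁ x)
    rw [hM]
    linarith
  have dθ : ∀ t ∈ Icc (0 : ℝ) h, HasDerivAt (fun t => θ t - θ₀) (H₀ (θ t) + h • H₁ (θ t)) t :=
    fun t ht => (ode t ht).sub_const θ₀
  have bB : ∀ t ∈ Icc (0 : ℝ) h, ‖θ t - θ₀‖ ≤ B := fun t ht => by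
    have := norm_le_gronwallBound_of_norm_deriv_right_le (δ := 0) (K := K₀ + K₁) (ε := M)
      (f := fun t => θ t - θ₀) (f' := fun t => H₀ (θ t) + h • H₁ (θ t)) (a := 0) (b := h)
      (fun t ht => (dθ t ht).continuousAt.continuousWithinAt)
      (fun t ht => (dθ t (Ico_subset_Icc_self ht)).hasDerivWithinAt)
      (by simp [init]) (fun t _ => vb _) t ht
    rw [sub_zero] at this
    exact this.trans (hBmono t (ht.2.trans hh1.le))
  have bA : ∀ t ∈ Icc (0 : ℝ) h, ‖θ t - θ₀‖ ≤ A * t := fun t ht => by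
    have := norm_image_sub_le_of_norm_deriv_le_segment' (C := A)
      (fun t ht => (dθ t ht).hasDerivWithinAt)
      (fun t ht => (vb _).trans (by
        have := bB t (Ico_subset_Icc_self ht)
        rw [hA]; gcongr)) t ht
    simpa [init] using this
  have bAh : ∀ t ∈ Icc (0 : ℝ) h, ‖θ t - θ₀‖ ≤ A * h := fun t ht =>
    (bA t ht).trans (mul_le_mul_of_nonneg_left ht.2 hA0)
  have bD : ∀ t ∈ Icc (0 : ℝ) h, ‖θ t - θ₀ - t • H₀ θ₀‖ ≤ D * h ^ 2 := fun t ht => by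
    have := norm_image_sub_le_of_norm_deriv_le_segment' (C := D * h)
      (f := fun t => θ t - θ₀ - t • H₀ θ₀)
      (f' := fun t => H₀ (θ t) + h • H₁ (θ t) - (1 : ℝ) • H₀ θ₀) (a := 0) (b := h)
      (fun t ht => ((dθ t ht).sub ((hasDerivAt_id t).smul_const (H₀ θ₀))).hasDerivWithinAt)
      (fun t ht => by
        have b := bAh t (Ico_subset_Icc_self ht)
        have e : H₀ (θ t) + h • H₁ (θ t) - (1 : ℝ) • H₀ θ₀ =
          (H₀ (θ t) - H₀ θ₀) + h • ((H₁ (θ t) - H₁ θ₀) + H₁ θ₀) := by module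
        rw [e]
        have l0 : ‖H₀ (θ t) - H₀ θ₀‖ ≤ K₀ * (A * h) := (lip0 _).trans (by gcongr)
        have l1 : ‖H₁ (θ t) - H₁ θ₀‖ ≤ K₁ * A := (lip1 _).trans (by
          gcongr; exact b.trans (mul_le_of_le_one_right hA0 hh1.le))
        have l2 : ‖H₁ (θ t) - H₁ θ₀ + H₁ θ₀‖ ≤ K₁ * A + M :=
          (norm_add_le _ _).trans (by rw [hM]; linarith [norm_nonneg (H₀ θ₀)])
        refine (norm_add_le _ _).trans ?_
        rw [norm_smul, Real.norm_of_nonneg hh.le]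
        have := mul_le_mul_of_nonneg_left l2 hh.le
        rw [hD]; linarith) t ht
    have e0 : ‖θ t - θ₀ - t • H₀ θ₀‖ ≤ D * h * t := by simpa [init] using this
    refine e0.trans ?_
    have := mul_le_mul_of_nonneg_left ht.2 (mul_nonneg hD0 hh.le)
    linarith
  have main := norm_image_sub_le_of_norm_deriv_le_segment' (C := C * h ^ 2)
    (f := fun t => θ t - θ₀ - t • H₀ θ₀ - t • (h • H₁ θ₀)
      - (t ^ 2) • ((1 / 2 : ℝ) • fderiv ℝ H₀ θ₀ (H₀ θ₀)))
    (f' := fun t => H₀ (θ t) + h • H₁ (θ t) - (1 : ℝ) • H₀ θ₀ - (1 : ℝ) • (h • H₁ θ₀)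
      - (((2 : ℕ) : ℝ) * t ^ (2 - 1)) • ((1 / 2 : ℝ) • fderiv ℝ H₀ θ₀ (H₀ θ₀))) (a := 0) (b := h)
    (fun t ht => ((((dθ t ht).sub ((hasDerivAt_id t).smul_const (H₀ θ₀))).sub
      ((hasDerivAt_id t).smul_const (h • H₁ θ₀))).sub
      ((hasDerivAt_pow 2 t).smul_const _)).hasDerivWithinAt)
    (fun t ht => by
      have ht' := Ico_subset_Icc_self ht
      have b := bAh t ht'
      have e : H₀ (θ t) + h • H₁ (θ t) - (1 : ℝ) • H₀ θ₀ - (1 : ℝ) • (h • H₁ θ₀)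
          - (((2 : ℕ) : ℝ) * t ^ (2 - 1)) • ((1 / 2 : ℝ) • fderiv ℝ H₀ θ₀ (H₀ θ₀)) =
          (H₀ (θ t) - H₀ θ₀ - fderiv ℝ H₀ θ₀ (θ t - θ₀)) + h • (H₁ (θ t) - H₁ θ₀)
          + fderiv ℝ H₀ θ₀ (θ t - θ₀ - t • H₀ θ₀) := by
        rw [map_sub (fderiv ℝ H₀ θ₀) (θ t - θ₀), map_smul]
        norm_num
        module
      rw [e]
      have t0 : ‖H₀ (θ t) - H₀ θ₀ - fderiv ℝ H₀ θ₀ (θ t - θ₀)‖ ≤ K₀ * (A * h) ^ 2 :=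
        (tay _).trans (by gcongr)
      have t1 : ‖h • (H₁ (θ t) - H₁ θ₀)‖ ≤ h * (K₁ * (A * h)) := by
        rw [norm_smul, Real.norm_of_nonneg hh.le]
        exact mul_le_mul_of_nonneg_left ((lip1 _).trans (by gcongr)) hh.le
      have t2 : ‖fderiv ℝ H₀ θ₀ (θ t - θ₀ - t • H₀ θ₀)‖ ≤ K₀ * (D * h ^ 2) :=
        (ContinuousLinearMap.le_opNorm _ _).trans
          (mul_le_mul (hd0 _) (bD t ht') (norm_nonneg _) hK)
      refine (norm_add₃_le).trans ?_
      rw [hC]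
      linarith) h ⟨hh.le, le_rfl⟩
  have e : θ h - (θ₀ + h • H₀ θ₀
      + h ^ 2 • (H₁ θ₀ + (1 / 2 : ℝ) • fderiv ℝ H₀ θ₀ (H₀ θ₀))) =
      θ h - θ₀ - h • H₀ θ₀ - h • (h • H₁ θ₀)
      - (h ^ 2) • ((1 / 2 : ℝ) • fderiv ℝ H₀ θ₀ (H₀ θ₀)) := by module
  rw [e]
  have e2 : ‖θ h - θ₀ - h • H₀ θ₀ - h • (h • H₁ θ₀)
      - (h ^ 2) • ((1 / 2 : ℝ) • fderiv ℝ H₀ θ₀ (H₀ θ₀))‖ ≤ C * h ^ 2 * h := by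
    simpa [init] using main
  refine e2.trans ?_
  have : 0 ≤ h ^ 3 := by positivity
  linarith
end

section
/- Let L₁, L₂ : ℝ^n → ℝ be three times continuously differentiable with bounded first, second and third derivatives. Fix θ₀ ∈ ℝ^n and define the two consecutive gradient descent updates θ₁(h) = θ₀ − h ∇L₁(θ₀) and θ₂(h) = θ₁(h) − h ∇L₂(θ₁(h)). For each h > 0 let θ̃_h solve the modified equation θ̇(t) = −∇L̃_{1,2}(θ(t)) + (h/2) [∇L₁, ∇L₂](θ(t)) with θ̃_h(0) = θ₀, where L̃_{1,2}(θ) = L₁(θ) + L₂(θ) + (h/4)‖∇L₁(θ)‖² + (h/4)‖∇L₂(θ)‖². Then there exist constants C > 0 and h₀ > 0 such that for all h ∈ (0, h₀), ‖θ̃_h(h) − θ₂(h)‖ ≤ C h³. -/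
open Set

/-- The Lie bracket of two vector fields `F, G : ℝⁿ → ℝⁿ`:
`[F, G](θ) = DG(θ) F(θ) - DF(θ) G(θ)`. -/
noncomputable def lieBracket {n : ℕ}
    (F G : EuclideanSpace ℝ (Fin n) → EuclideanSpace ℝ (Fin n))
    (θ : EuclideanSpace ℝ (Fin n)) : EuclideanSpace ℝ (Fin n) :=
  fderiv ℝ G θ (F θ) - fderiv ℝ F θ (G θ)

section helpers
variable {E : Type*} [NormedAddCommGroup E] [NormedSpace ℝ E]

lemma cl_taylor {g : E → E} {A : E → E →L[ℝ] E} {K : ℝ}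
    (hK : 0 ≤ K) (hg : ∀ x, HasFDerivAt g (A x) x)
    (hA : ∀ x y, ‖A x - A y‖ ≤ K * ‖x - y‖) (x y : E) :
    ‖g y - g x - A x (y - x)‖ ≤ K * ‖y - x‖ ^ 2 := by
  have := Convex.norm_image_sub_le_of_norm_hasFDerivWithin_le'
    (f := g) (f' := A) (φ := A x) (C := K * ‖y - x‖)
    (s := Metric.closedBall x ‖y - x‖) (x := x) (y := y)
    (fun z _ => (hg z).hasFDerivWithinAt)
    (fun z hz => (hA z x).trans (by
      rw [Metric.mem_closedBall, dist_eq_norm] at hz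
      gcongr))
    (convex_closedBall _ _) (by simp) (by simp [dist_eq_norm])
  calc _ ≤ _ := this
    _ = _ := by ring

lemma cl_lip {g : E → E} {A : E → E →L[ℝ] E} {K : ℝ}
    (hg : ∀ x, HasFDerivAt g (A x) x)
    (hA : ∀ x, ‖A x‖ ≤ K) (x y : E) :
    ‖g y - g x‖ ≤ K * ‖y - x‖ :=
  Convex.norm_image_sub_le_of_norm_hasFDerivWithin_le
    (f := g) (f' := A) (s := univ)
    (fun z _ => (hg z).hasFDerivWithinAt) (fun z _ => hA z) convex_univ trivial trivial

lemma cl_prod {g : E → E} {A : E → E →L[ℝ] E} {K : ℝ} (hK : 0 ≤ K)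
    (hg : ∀ x, ‖g x‖ ≤ K) (hgl : ∀ x y, ‖g y - g x‖ ≤ K * ‖y - x‖)
    (hA : ∀ x, ‖A x‖ ≤ K) (hAl : ∀ x y, ‖A x - A y‖ ≤ K * ‖x - y‖) (x y : E) :
    ‖A y (g y) - A x (g x)‖ ≤ 2 * K ^ 2 * ‖y - x‖ := by
  have e : A y (g y) - A x (g x) = A y (g y - g x) + (A y - A x) (g x) := by simp
  rw [e]
  have h1 := ((A y).le_opNorm (g y - g x)).trans
    (mul_le_mul (hA y) (hgl x y) (norm_nonneg _) hK)
  have h2 := ((A y - A x).le_opNorm (g x)).trans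
    (mul_le_mul (hAl y x) (hg x) (norm_nonneg _) (by positivity))
  linarith [norm_add_le (A y (g y - g x)) ((A y - A x) (g x))]

lemma cl_flow {f c : E → E} {B : E →L[ℝ] E} {K N Q P : ℝ} {θ₀ : E}
    (hK : 0 ≤ K) (hN : 0 ≤ N) (hQ : 0 ≤ Q) (hP : 0 ≤ P)
    (hf : ∀ x, ‖f x‖ ≤ K) (hfl : ∀ x y, ‖f y - f x‖ ≤ K * ‖y - x‖) (hB : ‖B‖ ≤ K)
    (hT : ∀ y, ‖f y - f θ₀ - B (y - θ₀)‖ ≤ P * ‖y - θ₀‖ ^ 2)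
    (hc : ∀ x, ‖c x‖ ≤ N) (hcl : ∀ x y, ‖c y - c x‖ ≤ Q * ‖y - x‖)
    {h : ℝ} (h0 : 0 < h) (h1 : h < 1) {x : ℝ → E} (hx0 : x 0 = θ₀)
    (hx : ∀ t ∈ Icc (0 : ℝ) h, HasDerivAt x (-(f (x t)) + h • c (x t)) t) :
    ‖x h - θ₀ + h • f θ₀ - (h ^ 2 / 2) • B (f θ₀) - (h * h) • c θ₀‖ ≤
      (P * (K + N) ^ 2 + K * (K * (K + N) + N) + Q * (K + N)) * h ^ 3 := by
  have b1 : ∀ t ∈ Icc (0 : ℝ) h, ‖x t - θ₀‖ ≤ (K + N) * h := by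
    intro t ht
    have := norm_image_sub_le_of_norm_deriv_le_segment' (f := x) (C := K + N)
      (fun t ht => (hx t ht).hasDerivWithinAt) (fun t ht => by
        refine (norm_add_le _ _).trans ?_
        rw [norm_neg, norm_smul, Real.norm_of_nonneg h0.le]
        have := mul_le_mul h1.le (hc (x t)) (norm_nonneg _) zero_le_one
        linarith [hf (x t)]) t ht
    rw [hx0] at this
    refine this.trans ?_
    have := ht.2
    gcongr
    linarith
  have b2 : ∀ t ∈ Icc (0 : ℝ) h, ‖x t - θ₀ + t • f θ₀‖ ≤ (K * (K + N) + N) * h ^ 2 := by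
    intro t ht
    have := norm_image_sub_le_of_norm_deriv_le_segment' (f := fun t => x t - θ₀ + t • f θ₀)
      (C := (K * (K + N) + N) * h)
      (f' := fun t => -(f (x t)) + h • c (x t) + (1 : ℝ) • f θ₀)
      (fun t ht => (((hx t ht).sub_const θ₀).add
        ((hasDerivAt_id t).smul_const (f θ₀))).hasDerivWithinAt) (fun t ht => by
        have e : -(f (x t)) + h • c (x t) + (1 : ℝ) • f θ₀
          = -(f (x t) - f θ₀) + h • c (x t) := by rw [one_smul]; abel
        rw [e]
        refine (norm_add_le _ _).trans ?_
        rw [norm_neg, norm_smul, Real.norm_of_nonneg h0.le]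
        have i1 := mul_le_mul_of_nonneg_left (hc (x t)) h0.le
        have i2 := mul_le_mul_of_nonneg_left (b1 t ⟨ht.1, ht.2.le⟩) hK
        linarith [hfl θ₀ (x t)]) t ht
    simp only [hx0, sub_self, zero_smul, add_zero, sub_zero] at this
    refine this.trans ?_
    have := ht.2
    calc _ ≤ (K * (K + N) + N) * h * h := by gcongr
      _ = _ := by ring
  have := norm_image_sub_le_of_norm_deriv_le_segment'
      (f := fun t => x t - θ₀ + t • f θ₀ - (t ^ 2 / 2) • B (f θ₀) - (t * h) • c θ₀)
      (C := (P * (K + N) ^ 2 + K * (K * (K + N) + N) + Q * (K + N)) * h ^ 2)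
      (f' := fun t => -(f (x t)) + h • c (x t) + (1 : ℝ) • f θ₀ - t • B (f θ₀) - h • c θ₀)
      (a := 0) (b := h)
      (fun t ht => by
        have d1 : HasDerivAt (fun t : ℝ => t ^ 2 / 2) t t := by
          have := ((hasDerivAt_id t).pow 2).div_const 2
          refine (this.congr_deriv ?_)
          simp
        have d2 : HasDerivAt (fun t : ℝ => t * h) h t := by
          simpa using (hasDerivAt_id t).mul_const h
        exact (((((hx t ht).sub_const θ₀).add
          ((hasDerivAt_id t).smul_const (f θ₀))).sub (d1.smul_const _)).sub
          (d2.smul_const _)).hasDerivWithinAt) (fun t ht => by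
        have e : -(f (x t)) + h • c (x t) + (1 : ℝ) • f θ₀ - t • B (f θ₀) - h • c θ₀
          = -(f (x t) - f θ₀ - B (x t - θ₀)) - B (x t - θ₀ + t • f θ₀)
            + h • (c (x t) - c θ₀) := by
          simp only [map_add, map_sub, map_smul, one_smul, smul_sub]; abel
        rw [e]
        have ht' : t ∈ Icc 0 h := ⟨ht.1, ht.2.le⟩
        have n1 := norm_add_le (-(f (x t) - f θ₀ - B (x t - θ₀)) - B (x t - θ₀ + t • f θ₀))
          (h • (c (x t) - c θ₀))
        have n2 := norm_sub_le (-(f (x t) - f θ₀ - B (x t - θ₀))) (B (x t - θ₀ + t • f θ₀))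
        rw [norm_neg] at n2
        rw [norm_smul h, Real.norm_of_nonneg h0.le] at n1
        have i1 : P * ‖x t - θ₀‖ ^ 2 ≤ P * ((K + N) * h) ^ 2 := by
          have := b1 t ht'
          gcongr
        have i2 := (B.le_opNorm (x t - θ₀ + t • f θ₀)).trans
          (mul_le_mul hB (b2 t ht') (norm_nonneg _) hK)
        have i3 := mul_le_mul_of_nonneg_left ((hcl θ₀ (x t)).trans
          (mul_le_mul_of_nonneg_left (b1 t ht') hQ)) h0.le
        have i0 := hT (x t)
        nlinarith) h ⟨h0.le, le_rfl⟩
  simp only [hx0] at this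
  simp only [sub_self, zero_smul, add_zero, sub_zero, zero_mul, ne_eq, OfNat.ofNat_ne_zero,
    not_false_eq_true, zero_pow, zero_div] at this
  refine this.trans (le_of_eq ?_)
  ring

end helpers

section grad
variable {n : ℕ} {L : EuclideanSpace ℝ (Fin n) → ℝ}


lemma cl_grad_eq : (fun x => gradient L x) =
    (InnerProductSpace.toDual ℝ (EuclideanSpace ℝ (Fin n))).symm ∘ (fderiv ℝ L) := rfl

lemma cl_grad_contDiff (hL : ContDiff ℝ 3 L) : ContDiff ℝ 2 (fun x => gradient L x) := by
  rw [cl_grad_eq]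
  exact (LinearIsometryEquiv.contDiff _).comp (hL.fderiv_right (by norm_num))

lemma cl_grad_norm (i : ℕ) (x : (EuclideanSpace ℝ (Fin n))) :
    ‖iteratedFDeriv ℝ i (fun x => gradient L x) x‖ = ‖iteratedFDeriv ℝ (i + 1) L x‖ := by
  rw [cl_grad_eq, LinearIsometryEquiv.norm_iteratedFDeriv_comp_left, norm_iteratedFDeriv_fderiv]

lemma cl_bounds (hL : ContDiff ℝ 3 L) {K : ℝ}
    (hb : ∀ i : ℕ, 1 ≤ i → i ≤ 3 → ∀ x, ‖iteratedFDeriv ℝ i L x‖ ≤ K) :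
    (∀ x, ‖gradient L x‖ ≤ K) ∧ (∀ x, ‖fderiv ℝ (fun x => gradient L x) x‖ ≤ K) ∧
    (∀ x, HasFDerivAt (fun x => gradient L x) (fderiv ℝ (fun x => gradient L x) x) x) ∧
    (∀ x y, ‖fderiv ℝ (fun x => gradient L x) x - fderiv ℝ (fun x => gradient L x) y‖
      ≤ K * ‖x - y‖) := by
  have hg := cl_grad_contDiff hL
  refine ⟨fun x => ?_, fun x => ?_, fun x => ?_, fun x y => ?_⟩
  · have := cl_grad_norm (L := L) 0 x
    rw [norm_iteratedFDeriv_zero] at this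
    rw [this]; exact hb _ (by norm_num) (by norm_num) x
  · have := cl_grad_norm (L := L) 1 x
    rw [norm_iteratedFDeriv_one] at this
    rw [this]; exact hb _ (by norm_num) (by norm_num) x
  · exact (hg.differentiable (by norm_num) x).hasFDerivAt
  · have h1 : ContDiff ℝ 1 (fderiv ℝ (fun x => gradient L x)) := hg.fderiv_right (by norm_num)
    refine Convex.norm_image_sub_le_of_norm_fderiv_le (𝕜 := ℝ) (s := univ)
      (fun z _ => h1.differentiable (by norm_num) z) (fun z _ => ?_) convex_univ trivial trivial
    have := cl_grad_norm (L := L) 2 z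
    rw [← norm_iteratedFDeriv_fderiv, norm_iteratedFDeriv_one] at this
    rw [this]; exact hb _ (by norm_num) (by norm_num) z

lemma cl_inner (hL : ContDiff ℝ 3 L) (x u v : (EuclideanSpace ℝ (Fin n))) :
    inner ℝ (fderiv ℝ (fun x => gradient L x) x u) v = fderiv ℝ (fderiv ℝ L) x u v := by
  have h2 : DifferentiableAt ℝ (fderiv ℝ L) x :=
    (hL.fderiv_right (m := 2) (by norm_num)).differentiable (by norm_num) x
  rw [cl_grad_eq, LinearIsometryEquiv.comp_fderiv]
  exact InnerProductSpace.toDual_symm_apply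

lemma cl_symm (hL : ContDiff ℝ 3 L) (x u v : (EuclideanSpace ℝ (Fin n))) :
    inner ℝ (fderiv ℝ (fun x => gradient L x) x u) v =
    inner ℝ (fderiv ℝ (fun x => gradient L x) x v) u := by
  rw [cl_inner hL, cl_inner hL]
  exact (hL.contDiffAt.isSymmSndFDerivAt (by simp; norm_num)) u v

lemma cl_grad_sq (hL : ContDiff ℝ 3 L) (x : (EuclideanSpace ℝ (Fin n))) :
    HasGradientAt (fun x => ‖gradient L x‖ ^ 2)
      ((2 : ℝ) • fderiv ℝ (fun x => gradient L x) x (gradient L x)) x := by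
  have hd : HasFDerivAt (fun x => gradient L x) (fderiv ℝ (fun x => gradient L x) x) x :=
    ((cl_grad_contDiff hL).differentiable (by norm_num) x).hasFDerivAt
  rw [hasGradientAt_iff_hasFDerivAt]
  refine hd.norm_sq.congr_fderiv ?_
  ext v
  have := cl_symm hL x v (gradient L x)
  simp [inner_smul_left, ← this, real_inner_comm]

lemma cl_grad_mod {L₁ L₂ : (EuclideanSpace ℝ (Fin n)) → ℝ} (hL₁ : ContDiff ℝ 3 L₁) (hL₂ : ContDiff ℝ 3 L₂)
    (h : ℝ) (x : (EuclideanSpace ℝ (Fin n))) :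
    gradient (fun θ => L₁ θ + L₂ θ + (h / 4) * ‖gradient L₁ θ‖ ^ 2
        + (h / 4) * ‖gradient L₂ θ‖ ^ 2) x =
    gradient L₁ x + gradient L₂ x
      + (h / 2) • (fderiv ℝ (fun x => gradient L₁ x) x (gradient L₁ x)
        + fderiv ℝ (fun x => gradient L₂ x) x (gradient L₂ x)) := by
  apply HasGradientAt.gradient
  have a1 := (hL₁.differentiable (by norm_num) x).hasGradientAt.hasFDerivAt
  have a2 := (hL₂.differentiable (by norm_num) x).hasGradientAt.hasFDerivAt
  have a3 := (cl_grad_sq hL₁ x).hasFDerivAt.const_mul (h / 4)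
  have a4 := (cl_grad_sq hL₂ x).hasFDerivAt.const_mul (h / 4)
  rw [hasGradientAt_iff_hasFDerivAt]
  refine (((a1.add a2).add a3).add a4).congr_fderiv ?_
  ext v
  simp only [map_add, map_smul, ContinuousLinearMap.add_apply, ContinuousLinearMap.smul_apply,
    smul_eq_mul]
  simp [inner_add_left, inner_smul_left]
  ring

end grad

/-- **Continual-learning modified equation theorem.**
Let `L₁, L₂ : ℝⁿ → ℝ` be C³ with bounded first, second and third derivatives, and let
`θ₂(h)` be the result of a gradient descent step on `L₁` followed by one on `L₂`,
both of learning rate `h`, starting at `θ₀`. If for each `h > 0` the curve `θt h` solves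
`θ̇ = -∇L̃₁₂(θ) + (h/2)[∇L₁, ∇L₂](θ)` with `θt h 0 = θ₀`, where
`L̃₁₂ = L₁ + L₂ + (h/4)‖∇L₁‖² + (h/4)‖∇L₂‖²`, then the discretization drift
`‖θt h h - θ₂(h)‖` is of order `O(h³)`. -/
theorem continual_learning_modified_equation {n : ℕ}
    (L₁ L₂ : EuclideanSpace ℝ (Fin n) → ℝ)
    (hL₁ : ContDiff ℝ 3 L₁) (hL₂ : ContDiff ℝ 3 L₂)
    (K : ℝ)
    (hb₁ : ∀ i : ℕ, 1 ≤ i → i ≤ 3 → ∀ x, ‖iteratedFDeriv ℝ i L₁ x‖ ≤ K)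
    (hb₂ : ∀ i : ℕ, 1 ≤ i → i ≤ 3 → ∀ x, ‖iteratedFDeriv ℝ i L₂ x‖ ≤ K)
    (θ₀ : EuclideanSpace ℝ (Fin n))
    (θ₁ θ₂ : ℝ → EuclideanSpace ℝ (Fin n))
    (hθ₁ : ∀ h : ℝ, θ₁ h = θ₀ - h • gradient L₁ θ₀)
    (hθ₂ : ∀ h : ℝ, θ₂ h = θ₁ h - h • gradient L₂ (θ₁ h))
    (Lmod : ℝ → EuclideanSpace ℝ (Fin n) → ℝ)
    (hLmod : ∀ h : ℝ, ∀ θ : EuclideanSpace ℝ (Fin n),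
      Lmod h θ = L₁ θ + L₂ θ + (h / 4) * ‖gradient L₁ θ‖ ^ 2
        + (h / 4) * ‖gradient L₂ θ‖ ^ 2)
    (θt : ℝ → ℝ → EuclideanSpace ℝ (Fin n))
    (hinit : ∀ h : ℝ, 0 < h → θt h 0 = θ₀)
    (hode : ∀ h : ℝ, 0 < h → ∀ t ∈ Icc (0 : ℝ) h,
      HasDerivAt (θt h)
        (-(gradient (Lmod h) (θt h t))
          + (h / 2) • lieBracket
              (fun x => gradient L₁ x) (fun x => gradient L₂ x) (θt h t)) t) :
    ∃ C > (0 : ℝ), ∃ h₀ > (0 : ℝ), ∀ h ∈ Ioo (0 : ℝ) h₀,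
      ‖θt h h - θ₂ h‖ ≤ C * h ^ 3 := by
  obtain ⟨g1, A1, d1, l1⟩ := cl_bounds hL₁ hb₁
  obtain ⟨g2, A2, d2, l2⟩ := cl_bounds hL₂ hb₂
  have hK : 0 ≤ K := (norm_nonneg _).trans (g1 θ₀)
  have hode' : ∀ h : ℝ, 0 < h → ∀ t ∈ Icc (0 : ℝ) h, HasDerivAt (θt h)
      (-(gradient (fun θ => L₁ θ + L₂ θ + (h / 4) * ‖gradient L₁ θ‖ ^ 2
        + (h / 4) * ‖gradient L₂ θ‖ ^ 2) (θt h t))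
          + (h / 2) • lieBracket
              (fun x => gradient L₁ x) (fun x => gradient L₂ x) (θt h t)) t := by
    intro h h0 t ht
    have e : Lmod h = _ := funext (hLmod h)
    rw [← e]
    exact hode h h0 t ht
  simp only [cl_grad_mod hL₁ hL₂, lieBracket] at hode'
  clear hode hLmod hb₁ hb₂ hL₁ hL₂
  have T1 := cl_taylor hK d1 l1
  have T2 := cl_taylor hK d2 l2
  have G1 := cl_lip d1 A1
  have G2 := cl_lip d2 A2
  have P11 := cl_prod hK g1 G1 A1 l1
  have P22 := cl_prod hK g2 G2 A2 l2
  have P12 := cl_prod hK g2 G2 A1 l1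
  have P21 := cl_prod hK g1 G1 A2 l2
  generalize fderiv ℝ (fun x => gradient L₁ x) = D1 at *
  generalize fderiv ℝ (fun x => gradient L₂ x) = D2 at *
  generalize gradient L₁ = F1 at *
  generalize gradient L₂ = F2 at *
  have op : ∀ (A : EuclideanSpace ℝ (Fin n) →L[ℝ] EuclideanSpace ℝ (Fin n)) v,
      ‖A‖ ≤ K → ‖v‖ ≤ K → ‖A v‖ ≤ K ^ 2 := fun A v hA hv => by
    have := (A.le_opNorm v).trans (mul_le_mul hA hv (norm_nonneg _) hK)
    linarith
  have tri : ∀ (a b c d : EuclideanSpace ℝ (Fin n)) (r : ℝ), ‖a‖ ≤ r → ‖b‖ ≤ r → ‖c‖ ≤ r →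
      ‖d‖ ≤ r → ‖(1 / 2 : ℝ) • (-a - b + c - d)‖ ≤ 2 * r := by
    intro a b c d r ha hb hc hd
    rw [norm_smul, Real.norm_of_nonneg (by norm_num)]
    have := norm_sub_le (-a - b + c) d
    have := norm_add_le (-a - b) c
    have := norm_sub_le (-a) b
    rw [norm_neg] at this
    linarith
  have key := fun (h : ℝ) (h0 : 0 < h) (h1 : h < 1) =>
    cl_flow (f := fun x => F1 x + F2 x)
      (c := fun x => (1 / 2 : ℝ) • (-D1 x (F1 x) - D2 x (F2 x) + D2 x (F1 x) - D1 x (F2 x)))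
      (B := D1 θ₀ + D2 θ₀) (K := 2 * K) (N := 2 * K ^ 2) (Q := 4 * K ^ 2) (P := 2 * K) (θ₀ := θ₀)
      (by positivity) (by positivity) (by positivity) (by positivity)
      (fun x => by linarith [norm_add_le (F1 x) (F2 x), g1 x, g2 x])
      (fun x y => by
        rw [add_sub_add_comm]
        linarith [norm_add_le (F1 y - F1 x) (F2 y - F2 x), G1 x y, G2 x y])
      (by linarith [norm_add_le (D1 θ₀) (D2 θ₀), A1 θ₀, A2 θ₀])
      (fun y => by
        have e : F1 y + F2 y - (F1 θ₀ + F2 θ₀) - (D1 θ₀ + D2 θ₀) (y - θ₀) =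
          (F1 y - F1 θ₀ - D1 θ₀ (y - θ₀)) + (F2 y - F2 θ₀ - D2 θ₀ (y - θ₀)) := by
          rw [ContinuousLinearMap.add_apply]; abel
        rw [e]
        refine (norm_add_le _ _).trans ?_
        linarith [T1 θ₀ y, T2 θ₀ y])
      (fun x => tri _ _ _ _ _ (op _ _ (A1 x) (g1 x)) (op _ _ (A2 x) (g2 x))
        (op _ _ (A2 x) (g1 x)) (op _ _ (A1 x) (g2 x)))
      (fun x y => by
        rw [← smul_sub]
        have := tri _ _ _ _ _ (P11 x y) (P22 x y) (P21 x y) (P12 x y)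
        have e : -D1 y (F1 y) - D2 y (F2 y) + D2 y (F1 y) - D1 y (F2 y) -
          (-D1 x (F1 x) - D2 x (F2 x) + D2 x (F1 x) - D1 x (F2 x)) =
          -(D1 y (F1 y) - D1 x (F1 x)) - (D2 y (F2 y) - D2 x (F2 x))
          + (D2 y (F1 y) - D2 x (F1 x)) - (D1 y (F2 y) - D1 x (F2 x)) := by abel
        rw [e]
        linarith)
      h0 h1 (hinit h h0) (fun t ht => by
        refine (hode' h h0 t ht).congr_deriv ?_
        module)
  set C₀ := 2 * K * (2 * K + 2 * K ^ 2) ^ 2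
    + 2 * K * (2 * K * (2 * K + 2 * K ^ 2) + 2 * K ^ 2) + 4 * K ^ 2 * (2 * K + 2 * K ^ 2) with hC
  have hC0 : 0 ≤ C₀ := by positivity
  refine ⟨C₀ + K ^ 3 + 1, by positivity, 1, one_pos, fun h hh => ?_⟩
  have k := key h hh.1 hh.2
  have h0 := hh.1
  have t2 := T2 θ₀ (θ₁ h)
  have e1 : θ₁ h - θ₀ = -(h • F1 θ₀) := by rw [hθ₁]; abel
  rw [e1, norm_neg, norm_smul, Real.norm_of_nonneg h0.le] at t2
  have t3 : K * (h * ‖F1 θ₀‖) ^ 2 ≤ K * (h * K) ^ 2 := by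
    have := g1 θ₀
    gcongr
  have e : θt h h - θ₂ h =
    (θt h h - θ₀ + h • (F1 θ₀ + F2 θ₀) - (h ^ 2 / 2) • (D1 θ₀ + D2 θ₀) (F1 θ₀ + F2 θ₀)
      - (h * h) • (1 / 2 : ℝ) • (-D1 θ₀ (F1 θ₀) - D2 θ₀ (F2 θ₀) + D2 θ₀ (F1 θ₀) - D1 θ₀ (F2 θ₀)))
    + h • (F2 (θ₁ h) - F2 θ₀ - D2 θ₀ (-(h • F1 θ₀))) := by
    rw [hθ₂]
    have : θ₁ h = θ₀ - h • F1 θ₀ := hθ₁ h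
    generalize F2 (θ₁ h) = z
    rw [this]
    simp only [ContinuousLinearMap.add_apply, map_add, map_neg, map_smul]
    module
  rw [e]
  refine (norm_add_le _ _).trans ?_
  rw [norm_smul h, Real.norm_of_nonneg h0.le]
  have t4 := mul_le_mul_of_nonneg_left (t2.trans t3) h0.le
  have : 0 < h ^ 3 := by positivity
  refine (add_le_add k t4).trans ?_
  nlinarith
end

section
/- Let L₁, L₂ : ℝ^n → ℝ be three times continuously differentiable with bounded first, second and third derivatives, and suppose the Lie bracket [∇L₁, ∇L₂] vanishes identically on ℝ^n. Fix θ₀ ∈ ℝ^n and define θ₁(h) = θ₀ − h ∇L₁(θ₀) and θ₂(h) = θ₁(h) − h ∇L₂(θ₁(h)). For each h > 0 let θ̃_h solve the gradient flow θ̇(t) = −∇L̃_{1,2}(θ(t)) with θ̃_h(0) = θ₀, where L̃_{1,2}(θ) = L₁(θ) + L₂(θ) + (h/4)‖∇L₁(θ)‖² + (h/4)‖∇L₂(θ)‖². Then there exist constants C > 0 and h₀ > 0 such that for all h ∈ (0, h₀), ‖θ̃_h(h) − θ₂(h)‖ ≤ C h³. -/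
open Set

/-- The Riesz isometry, as a real linear isometry from the dual to the space. -/
noncomputable def rieszIso (n : ℕ) :
    (EuclideanSpace ℝ (Fin n) →L[ℝ] ℝ) ≃ₗᵢ[ℝ] EuclideanSpace ℝ (Fin n) where
  toFun := fun l => (InnerProductSpace.toDual ℝ (EuclideanSpace ℝ (Fin n))).symm l
  invFun := fun l => InnerProductSpace.toDual ℝ (EuclideanSpace ℝ (Fin n)) l
  map_add' := fun x y => by simp
  map_smul' := fun c x => by simp
  left_inv := fun x => by simp
  right_inv := fun x => by simp
  norm_map' := fun x => by
    exact (InnerProductSpace.toDual ℝ (EuclideanSpace ℝ (Fin n))).symm.norm_map x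

lemma taylor_two {E : Type*} [NormedAddCommGroup E] [NormedSpace ℝ E]
    {A : E → E} {A' : E → E →L[ℝ] E} {K : ℝ} (hK : 0 ≤ K)
    (hA : ∀ x, HasFDerivAt A (A' x) x)
    (hlip : ∀ x y, ‖A' x - A' y‖ ≤ K * ‖x - y‖) (c x : E) :
    ‖A x - A c - A' c (x - c)‖ ≤ K * ‖x - c‖ ^ 2 := by
  have := (convex_closedBall c ‖x - c‖).norm_image_sub_le_of_norm_hasFDerivWithin_le'
    (f := A) (f' := A') (φ := A' c) (C := K * ‖x - c‖) (x := c) (y := x)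
    (fun z _ => (hA z).hasFDerivWithinAt)
    (fun z hz => (hlip z c).trans (by
      rw [Metric.mem_closedBall, dist_eq_norm] at hz
      gcongr))
    (by simp) (by simp [dist_eq_norm])
  calc _ ≤ _ := this
    _ = _ := by ring

lemma curve_bound {E : Type*} [NormedAddCommGroup E] [NormedSpace ℝ E]
    {y y' : ℝ → E} {h C : ℝ} (hy : ∀ t ∈ Icc (0 : ℝ) h, HasDerivAt y (y' t) t)
    (hb : ∀ t ∈ Icc (0 : ℝ) h, ‖y' t‖ ≤ C) (h0 : y 0 = 0) :
    ∀ t ∈ Icc (0 : ℝ) h, ‖y t‖ ≤ C * t := by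
  intro t ht
  have := (convex_Icc (0 : ℝ) h).norm_image_sub_le_of_norm_hasDerivWithin_le
    (f := y) (f' := y') (C := C) (x := 0) (y := t)
    (fun z hz => (hy z hz).hasDerivWithinAt) hb ⟨le_rfl, ht.1.trans ht.2⟩ ht
  simpa [h0, abs_of_nonneg ht.1] using this

lemma abstract_drift {E : Type*} [NormedAddCommGroup E] [NormedSpace ℝ E]
    {F G : E → E} {F' G' : E → E →L[ℝ] E} {K : ℝ} (hK : 0 ≤ K)
    (hF : ∀ x, HasFDerivAt F (F' x) x) (hG : ∀ x, HasFDerivAt G (G' x) x)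
    (bF : ∀ x, ‖F x‖ ≤ K) (bG : ∀ x, ‖G x‖ ≤ K)
    (bF' : ∀ x, ‖F' x‖ ≤ K) (bG' : ∀ x, ‖G' x‖ ≤ K)
    (lF' : ∀ x y, ‖F' x - F' y‖ ≤ K * ‖x - y‖) (lG' : ∀ x y, ‖G' x - G' y‖ ≤ K * ‖x - y‖)
    (hcomm : ∀ x, G' x (F x) = F' x (G x)) (c : E) :
    ∃ C > (0 : ℝ), ∀ h : ℝ, 0 < h → h < 1 → ∀ x : ℝ → E, x 0 = c →
      (∀ t ∈ Icc (0 : ℝ) h, HasDerivAt x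
        (-(F (x t) + G (x t) + (h / 2) • (F' (x t) (F (x t)) + G' (x t) (G (x t))))) t) →
      ‖x h - (c - h • F c - h • G (c - h • F c))‖ ≤ C * h ^ 3 := by
  set A : E → E := fun x => F x + G x with hAdef
  set A' : E → E →L[ℝ] E := fun x => F' x + G' x with hA'def
  set B : E → E := fun x => F' x (F x) + G' x (G x) with hBdef
  have hA : ∀ x, HasFDerivAt A (A' x) x := fun x => (hF x).add (hG x)
  have lF : ∀ x y, ‖F x - F y‖ ≤ K * ‖x - y‖ := fun x y =>
    convex_univ.norm_image_sub_le_of_norm_hasFDerivWithin_le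
      (fun z _ => (hF z).hasFDerivWithinAt) (fun z _ => bF' z) (mem_univ y) (mem_univ x)
  have lG : ∀ x y, ‖G x - G y‖ ≤ K * ‖x - y‖ := fun x y =>
    convex_univ.norm_image_sub_le_of_norm_hasFDerivWithin_le
      (fun z _ => (hG z).hasFDerivWithinAt) (fun z _ => bG' z) (mem_univ y) (mem_univ x)
  have bA : ∀ x, ‖A x‖ ≤ 2 * K := fun x =>
    (norm_add_le _ _).trans (by linarith [bF x, bG x])
  have bA' : ∀ x, ‖A' x‖ ≤ 2 * K := fun x =>
    (norm_add_le _ _).trans (by linarith [bF' x, bG' x])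
  have lA : ∀ x y, ‖A x - A y‖ ≤ 2 * K * ‖x - y‖ := fun x y => by
    have : A x - A y = (F x - F y) + (G x - G y) := by simp only [hAdef]; abel
    rw [this]
    exact (norm_add_le _ _).trans (by linarith [lF x y, lG x y])
  have lA' : ∀ x y, ‖A' x - A' y‖ ≤ 2 * K * ‖x - y‖ := fun x y => by
    have : A' x - A' y = (F' x - F' y) + (G' x - G' y) := by simp only [hA'def]; abel
    rw [this]
    exact (norm_add_le _ _).trans (by linarith [lF' x y, lG' x y])
  have bmul : ∀ (T : E →L[ℝ] E) (v : E) (a b : ℝ), ‖T‖ ≤ a → ‖v‖ ≤ b → ‖T v‖ ≤ a * b :=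
    fun T v a b h1 h2 => (T.le_opNorm v).trans
      (mul_le_mul h1 h2 (norm_nonneg _) ((norm_nonneg _).trans h1))
  have bB : ∀ x, ‖B x‖ ≤ 2 * K ^ 2 := fun x =>
    (norm_add_le _ _).trans (by
      linarith [bmul _ _ _ _ (bF' x) (bF x), bmul _ _ _ _ (bG' x) (bG x)])
  have lB : ∀ x y, ‖B x - B y‖ ≤ 4 * K ^ 2 * ‖x - y‖ := fun x y => by
    have : B x - B y = ((F' x - F' y) (F x) + F' y (F x - F y))
        + ((G' x - G' y) (G x) + G' y (G x - G y)) := by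
      simp only [hBdef, map_sub, sub_apply]; abel
    rw [this]
    have h1 := bmul _ _ _ _ (lF' x y) (bF x)
    have h2 := bmul _ _ _ _ (bF' y) (lF x y)
    have h3 := bmul _ _ _ _ (lG' x y) (bG x)
    have h4 := bmul _ _ _ _ (bG' y) (lG x y)
    refine (norm_add_le _ _).trans ((add_le_add (norm_add_le _ _) (norm_add_le _ _)).trans ?_)
    linarith
  set M : ℝ := 2 * K + K ^ 2 with hM
  have hM0 : 0 ≤ M := by positivity
  set C1 : ℝ := 2 * K * M ^ 2 + 2 * K * (2 * K * M + K ^ 2) + 2 * K ^ 2 * M with hC1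
  refine ⟨C1 + K ^ 3 + 1, by positivity, ?_⟩
  intro h h0 h1 x hx0 hx
  have hhm : h ∈ Icc (0 : ℝ) h := ⟨h0.le, le_rfl⟩
  have nB : ∀ z, ‖(h / 2) • B z‖ ≤ h * K ^ 2 := fun z => by
    rw [norm_smul, Real.norm_of_nonneg (by positivity)]
    nlinarith [bB z]
  -- step 1
  have s1 : ∀ t ∈ Icc (0 : ℝ) h, ‖x t - c‖ ≤ M * t := by
    refine curve_bound (y := fun t => x t - c) (fun t ht => (hx t ht).sub_const c) ?_ (by simp [hx0])
    intro t ht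
    rw [norm_neg]
    refine (norm_add_le _ _).trans ?_
    have := nB (x t)
    have := bA (x t)
    simp only [hAdef, hBdef] at *
    nlinarith [sq_nonneg K]
  -- step 2
  have s2 : ∀ t ∈ Icc (0 : ℝ) h, ‖x t - c + t • A c‖ ≤ ((2 * K * M + K ^ 2) * h) * t := by
    refine curve_bound (y := fun t => x t - c + t • A c)
      (fun t ht => ((hx t ht).sub_const c).add ((hasDerivAt_id t).smul_const (A c))) ?_
      (by simp [hx0])
    intro t ht
    have e : -(F (x t) + G (x t) + (h / 2) • (F' (x t) (F (x t)) + G' (x t) (G (x t))))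
        + (1 : ℝ) • A c = -((A (x t) - A c) + (h / 2) • B (x t)) := by
      simp only [hAdef, hBdef, one_smul]; abel
    rw [e, norm_neg]
    refine (norm_add_le _ _).trans ?_
    have a1 := nB (x t)
    have a2 := lA (x t) c
    have a3 : 2 * K * ‖x t - c‖ ≤ 2 * K * (M * h) := by
      have : ‖x t - c‖ ≤ M * h := (s1 t ht).trans (by gcongr; exact ht.2)
      gcongr
    linarith
  -- step 3
  have s3 : ∀ t ∈ Icc (0 : ℝ) h,
      ‖x t - c + t • (A c + (h / 2) • B c) - (t ^ 2 / 2) • A' c (A c)‖ ≤ (C1 * h ^ 2) * t := by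
    refine curve_bound
      (y := fun t => x t - c + t • (A c + (h / 2) • B c) - (t ^ 2 / 2) • A' c (A c))
      (y' := fun t => -(F (x t) + G (x t) + (h / 2) • (F' (x t) (F (x t)) + G' (x t) (G (x t))))
        + (1 : ℝ) • (A c + (h / 2) • B c) - t • A' c (A c))
      (fun t ht => ?_) ?_ (by simp [hx0])
    · have hsq : HasDerivAt (fun t : ℝ => t ^ 2 / 2) t t := by
        have := (hasDerivAt_pow 2 t).div_const 2
        exact this.congr_deriv (by simp)
      exact (((hx t ht).sub_const c).add ((hasDerivAt_id t).smul_const _)).sub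
        (hsq.smul_const (A' c (A c)))
    intro t ht
    have e : -(F (x t) + G (x t) + (h / 2) • (F' (x t) (F (x t)) + G' (x t) (G (x t))))
        + (1 : ℝ) • (A c + (h / 2) • B c) - t • A' c (A c)
        = -((A (x t) - A c - A' c (x t - c)) + A' c (x t - c + t • A c)
          + (h / 2) • (B (x t) - B c)) := by
      rw [map_add (A' c) (x t - c), map_smul]
      simp only [one_smul, smul_sub]
      change -(A (x t) + (h / 2) • B (x t)) + _ - _ = _
      abel
    change ‖-(F (x t) + G (x t) + (h / 2) • (F' (x t) (F (x t)) + G' (x t) (G (x t))))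
        + (1 : ℝ) • (A c + (h / 2) • B c) - t • A' c (A c)‖ ≤ _
    rw [e, norm_neg]
    refine (norm_add_le _ _).trans ((add_le_add_left (norm_add_le _ _) _).trans ?_)
    have hd : ‖x t - c‖ ≤ M * h := (s1 t ht).trans (by gcongr; exact ht.2)
    have a1 : ‖A (x t) - A c - A' c (x t - c)‖ ≤ 2 * K * (M * h) ^ 2 :=
      (taylor_two (by positivity) hA lA' c (x t)).trans (by gcongr)
    have a2 : ‖A' c (x t - c + t • A c)‖ ≤ 2 * K * (((2 * K * M + K ^ 2) * h) * h) :=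
      bmul _ _ _ _ (bA' c) ((s2 t ht).trans (by gcongr; exact ht.2))
    have a3 : ‖(h / 2) • (B (x t) - B c)‖ ≤ (h / 2) * (4 * K ^ 2 * (M * h)) := by
      rw [norm_smul, Real.norm_of_nonneg (by positivity)]
      have := lB (x t) c
      gcongr
      exact this.trans (by gcongr)
    refine (add_le_add (add_le_add a1 a2) a3).trans (le_of_eq ?_)
    simp only [hC1]; ring
  -- step 4
  have s4 := taylor_two hK hG lG' c (c - h • F c)
  have n4 : ‖c - h • F c - c‖ ≤ h * K := by
    rw [sub_sub_cancel_left, norm_neg, norm_smul, Real.norm_of_nonneg h0.le]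
    gcongr; exact bF c
  have s4' : ‖G (c - h • F c) - G c - G' c (c - h • F c - c)‖ ≤ K * (h * K) ^ 2 :=
    s4.trans (by gcongr)
  have key : x h - (c - h • F c - h • G (c - h • F c))
      = (x h - c + h • (A c + (h / 2) • B c) - (h ^ 2 / 2) • A' c (A c))
        + h • (G (c - h • F c) - G c - G' c (c - h • F c - c)) := by
    rw [sub_sub_cancel_left, map_neg, map_smul]
    simp only [hAdef, hBdef, hA'def, add_apply, map_add, hcomm]
    module
  rw [key]
  refine (norm_add_le _ _).trans ?_
  have b1 := s3 h hhm
  have b2 : ‖h • (G (c - h • F c) - G c - G' c (c - h • F c - c))‖ ≤ h * (K * (h * K) ^ 2) := by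
    rw [norm_smul, Real.norm_of_nonneg h0.le]
    gcongr
  have : 0 ≤ h ^ 3 := by positivity
  nlinarith

lemma gradient_eq_riesz {n : ℕ} (L : EuclideanSpace ℝ (Fin n) → ℝ) :
    (fun x => gradient L x) = rieszIso n ∘ fderiv ℝ L := rfl

lemma grad_facts {n : ℕ} {L : EuclideanSpace ℝ (Fin n) → ℝ} (hL : ContDiff ℝ 3 L) {K : ℝ}
    (hb : ∀ i : ℕ, 1 ≤ i → i ≤ 3 → ∀ x, ‖iteratedFDeriv ℝ i L x‖ ≤ K) :
    (∀ x, HasFDerivAt (fun x => gradient L x) (fderiv ℝ (fun x => gradient L x) x) x) ∧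
    (∀ x, ‖gradient L x‖ ≤ K) ∧
    (∀ x, ‖fderiv ℝ (fun x => gradient L x) x‖ ≤ K) ∧
    (∀ x y, ‖fderiv ℝ (fun x => gradient L x) x - fderiv ℝ (fun x => gradient L x) y‖
      ≤ K * ‖x - y‖) ∧
    (∀ x, HasGradientAt (fun x => ‖gradient L x‖ ^ 2)
      ((2 : ℝ) • fderiv ℝ (fun x => gradient L x) x (gradient L x)) x) := by
  have hfd : ContDiff ℝ 2 (fderiv ℝ L) := hL.fderiv_right (by norm_num)
  have hg : ContDiff ℝ 2 (fun x => gradient L x) := by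
    rw [gradient_eq_riesz]
    exact (rieszIso n).contDiff.comp hfd
  have hnorm : ∀ i x, ‖iteratedFDeriv ℝ i (fun x => gradient L x) x‖
      = ‖iteratedFDeriv ℝ (i + 1) L x‖ := fun i x => by
    rw [gradient_eq_riesz, (rieszIso n).norm_iteratedFDeriv_comp_left, norm_iteratedFDeriv_fderiv]
  have hgd : ∀ x, HasFDerivAt (fun x => gradient L x) (fderiv ℝ (fun x => gradient L x) x) x :=
    fun x => (hg.differentiable (by norm_num) x).hasFDerivAt
  refine ⟨hgd, ?_, ?_, ?_, ?_⟩
  · intro x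
    have := hnorm 0 x
    rw [norm_iteratedFDeriv_zero] at this
    rw [this]
    exact hb 1 le_rfl (by norm_num) x
  · intro x
    rw [← norm_iteratedFDeriv_one, hnorm 1 x]
    exact hb 2 (by norm_num) (by norm_num) x
  · intro x y
    have hdd : ContDiff ℝ 1 (fderiv ℝ (fun x => gradient L x)) := hg.fderiv_right (by norm_num)
    refine convex_univ.norm_image_sub_le_of_norm_fderiv_le (𝕜 := ℝ)
      (fun z _ => hdd.differentiable (by norm_num) z) (fun z _ => ?_) (mem_univ y) (mem_univ x)
    rw [← norm_iteratedFDeriv_one, norm_iteratedFDeriv_fderiv, hnorm 2 z]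
    exact hb 3 (by norm_num) (by norm_num) z
  · intro x
    have h1 := (hgd x).norm_sq
    rw [hasGradientAt_iff_hasFDerivAt]
    have hfdx : HasFDerivAt (fderiv ℝ L) (fderiv ℝ (fderiv ℝ L) x) x :=
      (hfd.differentiable (by norm_num) x).hasFDerivAt
    have hD : ∀ u v, inner ℝ (fderiv ℝ (fun x => gradient L x) x u) v
        = fderiv ℝ (fderiv ℝ L) x u v := by
      intro u v
      have : HasFDerivAt (fun x => gradient L x)
          (((rieszIso n).toContinuousLinearEquiv : _ →L[ℝ] _).comp (fderiv ℝ (fderiv ℝ L) x)) x :=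
        ((rieszIso n).toContinuousLinearEquiv.hasFDerivAt).comp x hfdx
      rw [this.fderiv]
      exact InnerProductSpace.toDual_symm_apply
    have hsymm : ∀ u v, fderiv ℝ (fderiv ℝ L) x u v = fderiv ℝ (fderiv ℝ L) x v u :=
      fun u v => (hL.contDiffAt.isSymmSndFDerivAt (by simp; norm_num)) u v
    refine h1.congr_fderiv (ContinuousLinearMap.ext fun v => ?_)
    have e1 : inner ℝ (fderiv ℝ (fun x => gradient L x) x (gradient L x)) v
        = inner ℝ (gradient L x) (fderiv ℝ (fun x => gradient L x) x v) := by
      rw [hD, hsymm, ← hD, real_inner_comm]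
    have e2 : inner ℝ ((2 : ℝ) • fderiv ℝ (fun x => gradient L x) x (gradient L x)) v
        = 2 * inner ℝ (gradient L x) (fderiv ℝ (fun x => gradient L x) x v) := by
      rw [real_inner_smul_left, e1]
    refine Eq.trans ?_ e2.symm
    simp

/-- **Continual learning with commuting task gradient flows.**
Let `L₁, L₂ : ℝⁿ → ℝ` be C³ with bounded first, second and third derivatives whose
gradient fields have identically vanishing Lie bracket `[∇L₁, ∇L₂] = 0`. Let `θ₂(h)` be the
result of a gradient descent step on `L₁` followed by one on `L₂`, both with learning
rate `h`, starting at `θ₀`. If for each `h > 0` the curve `θt h` solves the gradient flow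
`θ̇ = -∇L̃₁₂(θ)` with `θt h 0 = θ₀`, where
`L̃₁₂ = L₁ + L₂ + (h/4)‖∇L₁‖² + (h/4)‖∇L₂‖²`, then the discretization drift
`‖θt h h - θ₂(h)‖` is of order `O(h³)`. -/
theorem continual_learning_commuting_flows {n : ℕ}
    (L₁ L₂ : EuclideanSpace ℝ (Fin n) → ℝ)
    (hL₁ : ContDiff ℝ 3 L₁) (hL₂ : ContDiff ℝ 3 L₂)
    (K : ℝ)
    (hb₁ : ∀ i : ℕ, 1 ≤ i → i ≤ 3 → ∀ x, ‖iteratedFDeriv ℝ i L₁ x‖ ≤ K)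
    (hb₂ : ∀ i : ℕ, 1 ≤ i → i ≤ 3 → ∀ x, ‖iteratedFDeriv ℝ i L₂ x‖ ≤ K)
    (hcomm : ∀ θ : EuclideanSpace ℝ (Fin n),
      lieBracket (fun x => gradient L₁ x) (fun x => gradient L₂ x) θ = 0)
    (θ₀ : EuclideanSpace ℝ (Fin n))
    (θ₁ θ₂ : ℝ → EuclideanSpace ℝ (Fin n))
    (hθ₁ : ∀ h : ℝ, θ₁ h = θ₀ - h • gradient L₁ θ₀)
    (hθ₂ : ∀ h : ℝ, θ₂ h = θ₁ h - h • gradient L₂ (θ₁ h))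
    (Lmod : ℝ → EuclideanSpace ℝ (Fin n) → ℝ)
    (hLmod : ∀ h : ℝ, ∀ θ : EuclideanSpace ℝ (Fin n),
      Lmod h θ = L₁ θ + L₂ θ + (h / 4) * ‖gradient L₁ θ‖ ^ 2
        + (h / 4) * ‖gradient L₂ θ‖ ^ 2)
    (θt : ℝ → ℝ → EuclideanSpace ℝ (Fin n))
    (hinit : ∀ h : ℝ, 0 < h → θt h 0 = θ₀)
    (hode : ∀ h : ℝ, 0 < h → ∀ t ∈ Icc (0 : ℝ) h,
      HasDerivAt (θt h) (-(gradient (Lmod h) (θt h t))) t) :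
    ∃ C > (0 : ℝ), ∃ h₀ > (0 : ℝ), ∀ h ∈ Ioo (0 : ℝ) h₀,
      ‖θt h h - θ₂ h‖ ≤ C * h ^ 3 := by
  obtain ⟨d1, n1, m1, l1, g1⟩ := grad_facts hL₁ hb₁
  obtain ⟨d2, n2, m2, l2, g2⟩ := grad_facts hL₂ hb₂
  have hK : 0 ≤ K := (norm_nonneg _).trans (n1 θ₀)
  obtain ⟨C, hC, H⟩ := abstract_drift hK d1 d2 n1 n2 m1 m2 l1 l2
    (fun x => sub_eq_zero.mp (hcomm x)) θ₀
  refine ⟨C, hC, 1, one_pos, ?_⟩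
  intro h hh
  rw [hθ₂, hθ₁]
  refine H h hh.1 hh.2 (θt h) (hinit h hh.1) ?_
  intro t ht
  refine (hode h hh.1 t ht).congr_deriv (congrArg Neg.neg ?_)
  apply HasGradientAt.gradient
  have e1 := ((hL₁.differentiable (by norm_num)) (θt h t)).hasGradientAt
  have e2 := ((hL₂.differentiable (by norm_num)) (θt h t)).hasGradientAt
  have e3 := g1 (θt h t)
  have e4 := g2 (θt h t)
  rw [hasGradientAt_iff_hasFDerivAt] at e1 e2 e3 e4 ⊢
  rw [show Lmod h = fun θ => L₁ θ + L₂ θ + (h / 4) * ‖gradient L₁ θ‖ ^ 2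
        + (h / 4) * ‖gradient L₂ θ‖ ^ 2 from funext (hLmod h)]
  refine (((e1.add e2).add (e3.const_mul (h / 4))).add (e4.const_mul (h / 4))).congr_fderiv ?_
  simp only [map_add, map_smul, LinearIsometryEquiv.map_smulₛₗ, conj_trivial]
  module
end

section
/- Let L₁, L₂ : ℝ^n → ℝ be three times continuously differentiable with bounded first, second and third derivatives. Fix θ₀ ∈ ℝ^n and define the reversed-order updates θ₁'(h) = θ₀ − h ∇L₂(θ₀) and θ₂'(h) = θ₁'(h) − h ∇L₁(θ₁'(h)). For each h > 0 let θ̂_h solve θ̇(t) = −∇L̃_{1,2}(θ(t)) − (h/2) [∇L₁, ∇L₂](θ(t)) with θ̂_h(0) = θ₀, where L̃_{1,2}(θ) = L₁(θ) + L₂(θ) + (h/4)‖∇L₁(θ)‖² + (h/4)‖∇L₂(θ)‖². Then there exist constants C > 0 and h₀ > 0 such that for all h ∈ (0, h₀), ‖θ̂_h(h) − θ₂'(h)‖ ≤ C h³. -/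
open Set

lemma grad_eq_comp {n : ℕ} : ∃ T : (StrongDual ℝ (EuclideanSpace ℝ (Fin n))) ≃ₗᵢ[ℝ]
    (EuclideanSpace ℝ (Fin n)), (∀ L : EuclideanSpace ℝ (Fin n) → ℝ,
      gradient L = T ∘ fderiv ℝ L) ∧ ∀ f v, inner ℝ (T f) v = f v := by
  refine ⟨(InnerProductSpace.toDual ℝ (EuclideanSpace ℝ (Fin n))).symm, fun L => rfl, ?_⟩
  intro f v
  exact InnerProductSpace.toDual_symm_apply

lemma grad_props {n : ℕ} (L : EuclideanSpace ℝ (Fin n) → ℝ) (hL : ContDiff ℝ 3 L) (K : ℝ)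
    (hb : ∀ i : ℕ, 1 ≤ i → i ≤ 3 → ∀ x, ‖iteratedFDeriv ℝ i L x‖ ≤ K) :
    Differentiable ℝ (gradient L) ∧ (∀ x, ‖gradient L x‖ ≤ K) ∧
    (∀ x, ‖fderiv ℝ (gradient L) x‖ ≤ K) ∧
    (∀ x y, ‖fderiv ℝ (gradient L) y - fderiv ℝ (gradient L) x‖ ≤ K * ‖y - x‖) ∧
    (∀ x u v, inner ℝ (fderiv ℝ (gradient L) x u) v = inner ℝ (fderiv ℝ (gradient L) x v) u) := by
  obtain ⟨T, hT, hTi⟩ := grad_eq_comp (n := n)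
  have hf : ContDiff ℝ 2 (fderiv ℝ L) := hL.fderiv_right (by norm_num)
  have hg : ContDiff ℝ 2 (gradient L) := by
    rw [hT]; exact T.contDiff.comp hf
  have hn : ∀ i : ℕ, i ≤ 2 → ∀ x, ‖iteratedFDeriv ℝ i (gradient L) x‖ ≤ K := by
    intro i hi x
    rw [hT, T.norm_iteratedFDeriv_comp_left, norm_iteratedFDeriv_fderiv]
    exact hb _ (by omega) (by omega) x
  have hdg : ContDiff ℝ 1 (fderiv ℝ (gradient L)) := hg.fderiv_right (by norm_num)
  refine ⟨hg.differentiable (by norm_num), fun x => ?_, fun x => ?_, fun x y => ?_, ?_⟩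
  · simpa using hn 0 (by norm_num) x
  · simpa [norm_iteratedFDeriv_one] using hn 1 (by norm_num) x
  · refine Convex.norm_image_sub_le_of_norm_fderiv_le (𝕜 := ℝ) (s := univ) 
      (fun z _ => (hdg.differentiable (by norm_num)) z) (fun z _ => ?_) convex_univ
      (mem_univ _) (mem_univ _)
    have := hn 2 (by norm_num) z
    rwa [← norm_iteratedFDeriv_fderiv, norm_iteratedFDeriv_one] at this
  · intro x u v
    have h1 : fderiv ℝ (gradient L) x = 
        (T : StrongDual ℝ (EuclideanSpace ℝ (Fin n)) →L[ℝ] _).comp (fderiv ℝ (fderiv ℝ L) x) := by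
      rw [hT]
      exact (T.hasFDerivAt.comp x ((hf.differentiable (by norm_num)) x).hasFDerivAt).fderiv
    have hs := (hL.contDiffAt (x := x)).isSymmSndFDerivAt
      (by rw [minSmoothness_of_isRCLikeNormedField]; exact_mod_cast (by norm_num : (2 : ℕ) ≤ 3))
    rw [h1]
    have := hs u v
    simp only [ContinuousLinearMap.comp_apply]
    exact (hTi _ _).trans (this.trans (hTi _ _).symm)

lemma grad_norm_sq {n : ℕ} (g : EuclideanSpace ℝ (Fin n) → EuclideanSpace ℝ (Fin n))
    (hg : Differentiable ℝ g)
    (hs : ∀ x u v, inner ℝ (fderiv ℝ g x u) v = inner ℝ (fderiv ℝ g x v) u)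
    (x : EuclideanSpace ℝ (Fin n)) (c : ℝ) :
    HasFDerivAt (fun y => c / 4 * ‖g y‖ ^ 2) 
      (InnerProductSpace.toDual ℝ _ ((c / 2) • fderiv ℝ g x (g x))) x := by
  have h := ((hg x).hasFDerivAt.norm_sq).const_mul (c / 4)
  refine h.congr_fderiv ?_
  ext v
  simp [inner_smul_left]
  rw [hs x (g x) v, real_inner_comm]
  ring

lemma grad_mod {n : ℕ} (L₁ L₂ Lm : EuclideanSpace ℝ (Fin n) → ℝ) (h : ℝ)
    (hL₁ : Differentiable ℝ L₁) (hL₂ : Differentiable ℝ L₂)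
    (hg₁ : Differentiable ℝ (gradient L₁)) (hg₂ : Differentiable ℝ (gradient L₂))
    (hs₁ : ∀ x u v, inner ℝ (fderiv ℝ (gradient L₁) x u) v = inner ℝ (fderiv ℝ (gradient L₁) x v) u)
    (hs₂ : ∀ x u v, inner ℝ (fderiv ℝ (gradient L₂) x u) v = inner ℝ (fderiv ℝ (gradient L₂) x v) u)
    (hLm : ∀ θ, Lm θ = L₁ θ + L₂ θ + (h / 4) * ‖gradient L₁ θ‖ ^ 2
        + (h / 4) * ‖gradient L₂ θ‖ ^ 2) (x : EuclideanSpace ℝ (Fin n)) :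
    gradient Lm x = gradient L₁ x + gradient L₂ x + (h / 2) • fderiv ℝ (gradient L₁) x (gradient L₁ x)
      + (h / 2) • fderiv ℝ (gradient L₂) x (gradient L₂ x) := by
  apply HasGradientAt.gradient
  rw [hasGradientAt_iff_hasFDerivAt]
  have e : Lm = fun θ => L₁ θ + L₂ θ + (h / 4) * ‖gradient L₁ θ‖ ^ 2
        + (h / 4) * ‖gradient L₂ θ‖ ^ 2 := funext hLm
  rw [e, map_add, map_add, map_add]
  exact (((hL₁ x).hasGradientAt.hasFDerivAt.add (hL₂ x).hasGradientAt.hasFDerivAt).add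
    (grad_norm_sq _ hg₁ hs₁ x h)).add (grad_norm_sq _ hg₂ hs₂ x h)

lemma taylor_quad {E : Type*} [NormedAddCommGroup E] [NormedSpace ℝ E] (g : E → E) (K : ℝ)
    (hK : 0 ≤ K) (hg : Differentiable ℝ g)
    (hl : ∀ x y, ‖fderiv ℝ g y - fderiv ℝ g x‖ ≤ K * ‖y - x‖) (x y : E) :
    ‖g y - g x - fderiv ℝ g x (y - x)‖ ≤ K * ‖y - x‖ ^ 2 := by
  have := Convex.norm_image_sub_le_of_norm_fderiv_le' (𝕜 := ℝ) (f := g) (φ := fderiv ℝ g x)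
    (s := Metric.closedBall x ‖y - x‖) (C := K * ‖y - x‖) (x := x) (y := y) (fun z _ => hg z)
    (fun z hz => (hl x z).trans ?_) (convex_closedBall _ _) (by simp) (by simp [dist_eq_norm])
  · calc _ ≤ _ := this
      _ = _ := by ring
  · rw [Metric.mem_closedBall, dist_eq_norm] at hz
    gcongr

lemma lip_first {E : Type*} [NormedAddCommGroup E] [NormedSpace ℝ E] (g : E → E) (K : ℝ)
    (hg : Differentiable ℝ g) (hd : ∀ x, ‖fderiv ℝ g x‖ ≤ K) (x y : E) :
    ‖g y - g x‖ ≤ K * ‖y - x‖ :=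
  Convex.norm_image_sub_le_of_norm_fderiv_le (𝕜 := ℝ) (s := univ) 
      (fun z _ => hg z) (fun z _ => hd z) convex_univ (mem_univ _) (mem_univ _)

lemma lip_prod {E : Type*} [NormedAddCommGroup E] [NormedSpace ℝ E] (a b : E → E) (K : ℝ)
    (hK : 0 ≤ K) (hb : Differentiable ℝ b)
    (bb : ∀ x, ‖b x‖ ≤ K)
    (da : ∀ x, ‖fderiv ℝ a x‖ ≤ K) (db : ∀ x, ‖fderiv ℝ b x‖ ≤ K)
    (la : ∀ x y, ‖fderiv ℝ a y - fderiv ℝ a x‖ ≤ K * ‖y - x‖) (x y : E) :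
    ‖fderiv ℝ a y (b y) - fderiv ℝ a x (b x)‖ ≤ 2 * K ^ 2 * ‖y - x‖ := by
  have e : fderiv ℝ a y (b y) - fderiv ℝ a x (b x) =
      (fderiv ℝ a y - fderiv ℝ a x) (b y) + fderiv ℝ a x (b y - b x) := by
    simp
  rw [e]
  calc _ ≤ ‖(fderiv ℝ a y - fderiv ℝ a x) (b y)‖ + ‖fderiv ℝ a x (b y - b x)‖ := norm_add_le _ _
    _ ≤ (K * ‖y - x‖) * K + K * (K * ‖y - x‖) := by
      gcongr
      · exact ContinuousLinearMap.le_of_opNorm_le_of_le _ (la x y) (bb y)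
      · exact ContinuousLinearMap.le_of_opNorm_le_of_le _ (da x) (lip_first b K hb db x y)
    _ = _ := by ring

lemma bd_prod {E : Type*} [NormedAddCommGroup E] [NormedSpace ℝ E] (a b : E → E) (K : ℝ)
    (bb : ∀ x, ‖b x‖ ≤ K) (da : ∀ x, ‖fderiv ℝ a x‖ ≤ K) (x : E) :
    ‖fderiv ℝ a x (b x)‖ ≤ K ^ 2 := by
  rw [pow_two]
  exact ContinuousLinearMap.le_of_opNorm_le_of_le _ (da x) (bb x)

/-- One-step expansion of the solution of `x' = -G x - (h/2) B x`. -/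
lemma ode_expansion {E : Type*} [NormedAddCommGroup E] [NormedSpace ℝ E]
    (G B : E → E) (A : E →L[ℝ] E) (P Q h : ℝ) (hP : 0 ≤ P) (hQ : 0 ≤ Q) (h0 : 0 < h) (h1 : h ≤ 1)
    (x₀ : E) (hG : ∀ x, ‖G x‖ ≤ P) (hA : ‖A‖ ≤ P) (hGl : ∀ x, ‖G x - G x₀‖ ≤ P * ‖x - x₀‖)
    (hGt : ∀ x, ‖G x - G x₀ - A (x - x₀)‖ ≤ P * ‖x - x₀‖ ^ 2)
    (hB : ∀ x, ‖B x‖ ≤ Q) (hBl : ∀ x, ‖B x - B x₀‖ ≤ Q * ‖x - x₀‖)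
    (θ : ℝ → E) (hi : θ 0 = x₀)
    (hd : ∀ t ∈ Icc (0 : ℝ) h, HasDerivAt θ (-(G (θ t)) - (h / 2) • B (θ t)) t) :
    ‖θ h - (x₀ - h • G x₀ + (h ^ 2 / 2) • A (G x₀) - (h ^ 2 / 2) • B x₀)‖ ≤
      (P * (P + Q) ^ 2 + P * (P * (P + Q) + Q) + Q * (P + Q)) * h ^ 3 := by
  have hM : ∀ t ∈ Icc (0 : ℝ) h, ‖θ t - x₀‖ ≤ (P + Q) * h := by
    intro t ht
    have := norm_image_sub_le_of_norm_deriv_le_segment' (a := 0) (b := h) (f := θ) (C := P + Q)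
      (fun t ht => (hd t ht).hasDerivWithinAt) (fun t ht => ?_) t ht
    · rw [hi] at this
      refine this.trans ?_
      gcongr
      linarith [ht.2]
    · refine (norm_sub_le _ _).trans ?_
      rw [norm_neg, norm_smul, Real.norm_of_nonneg (by positivity)]
      have := hG (θ t)
      have h2 := hB (θ t)
      have : h / 2 * ‖B (θ t)‖ ≤ 1 * Q := by
        gcongr
        linarith
      linarith
  have hN : ∀ t ∈ Icc (0 : ℝ) h, ‖θ t - x₀ + t • G x₀‖ ≤ (P * (P + Q) + Q) * h ^ 2 := by
    intro t ht
    have := norm_image_sub_le_of_norm_deriv_le_segment' (a := 0) (b := h) 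
      (f := fun t => θ t - x₀ + t • G x₀) (C := (P * (P + Q) + Q) * h)
      (fun t ht => (((hd t ht).sub_const x₀).add 
        ((hasDerivAt_id t).smul_const (G x₀))).hasDerivWithinAt) (fun t ht => ?_) t ht
    · simp only [hi, sub_self, zero_smul, add_zero, sub_zero] at this
      refine this.trans ?_
      rw [pow_two, ← mul_assoc]
      gcongr
      exact ht.2
    · have e : -(G (θ t)) - (h / 2) • B (θ t) + (1 : ℝ) • G x₀ =
        -(G (θ t) - G x₀) - (h / 2) • B (θ t) := by module
      rw [e]
      refine (norm_sub_le _ _).trans ?_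
      rw [norm_neg, norm_smul, Real.norm_of_nonneg (by positivity)]
      have a1 := hGl (θ t)
      have a2 := hM t (Ico_subset_Icc_self ht)
      have a3 : P * ‖θ t - x₀‖ ≤ P * ((P + Q) * h) := by gcongr
      have a4 : h / 2 * ‖B (θ t)‖ ≤ h * Q := by
        gcongr
        · linarith
        · exact hB _
      linarith
  have := norm_image_sub_le_of_norm_deriv_le_segment' (a := 0) (b := h) 
      (f := fun t => θ t - x₀ + t • G x₀ - (t ^ 2) • ((1 / 2 : ℝ) • A (G x₀)) + t • ((h / 2) • B x₀))
      (C := (P * (P + Q) ^ 2 + P * (P * (P + Q) + Q) + Q * (P + Q)) * h ^ 2)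
      (fun t ht => (((((hd t ht).sub_const x₀).add 
        ((hasDerivAt_id t).smul_const (G x₀))).sub 
        ((hasDerivAt_pow 2 t).smul_const ((1 / 2 : ℝ) • A (G x₀)))).add
        ((hasDerivAt_id t).smul_const ((h / 2) • B x₀))).hasDerivWithinAt) 
      (fun t ht => ?_) h (right_mem_Icc.2 h0.le)
  · simp only [hi] at this
    convert this using 1
    · congr 1
      simp
      module
    · ring
  · have ht' := Ico_subset_Icc_self ht
    have e : -(G (θ t)) - (h / 2) • B (θ t) + (1 : ℝ) • G x₀ 
        - (((2 : ℕ) : ℝ) * t ^ (2 - 1)) • ((1 / 2 : ℝ) • A (G x₀)) + (1 : ℝ) • ((h / 2) • B x₀) =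
        -(G (θ t) - G x₀ - A (θ t - x₀)) - A (θ t - x₀ + t • G x₀)
          - (h / 2) • (B (θ t) - B x₀) := by
      simp only [map_add, map_smul]
      norm_num
      module
    rw [e]
    have a2 := hM t ht'
    have b1 : ‖G (θ t) - G x₀ - A (θ t - x₀)‖ ≤ P * ((P + Q) * h) ^ 2 := by
      refine (hGt _).trans ?_
      gcongr
    have b2 : ‖A (θ t - x₀ + t • G x₀)‖ ≤ P * ((P * (P + Q) + Q) * h ^ 2) :=
      ContinuousLinearMap.le_of_opNorm_le_of_le _ hA (hN t ht')
    have b3 : ‖(h / 2) • (B (θ t) - B x₀)‖ ≤ h * (Q * ((P + Q) * h)) := by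
      rw [norm_smul, Real.norm_of_nonneg (by positivity)]
      have := hBl (θ t)
      gcongr
      · linarith
      · exact this.trans (by gcongr)
    refine (norm_sub_le _ _).trans ?_
    have := norm_sub_le (-(G (θ t) - G x₀ - A (θ t - x₀))) (A (θ t - x₀ + t • G x₀))
    rw [norm_neg] at this
    nlinarith

/-- **Continual-learning modified equation with the task order reversed.**
Let `L₁, L₂ : ℝⁿ → ℝ` be C³ with bounded first, second and third derivatives, and let
`θ₂'(h)` be the result of a gradient descent step on `L₂` followed by one on `L₁`, both
of learning rate `h`, starting at `θ₀`. If for each `h > 0` the curve `θt h` solves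
`θ̇ = -∇L̃₁₂(θ) - (h/2)[∇L₁, ∇L₂](θ)` with `θt h 0 = θ₀`, where
`L̃₁₂ = L₁ + L₂ + (h/4)‖∇L₁‖² + (h/4)‖∇L₂‖²`, then the discretization drift
`‖θt h h - θ₂'(h)‖` is of order `O(h³)`. -/
theorem continual_learning_reversed_order {n : ℕ}
    (L₁ L₂ : EuclideanSpace ℝ (Fin n) → ℝ)
    (hL₁ : ContDiff ℝ 3 L₁) (hL₂ : ContDiff ℝ 3 L₂)
    (K : ℝ)
    (hb₁ : ∀ i : ℕ, 1 ≤ i → i ≤ 3 → ∀ x, ‖iteratedFDeriv ℝ i L₁ x‖ ≤ K)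
    (hb₂ : ∀ i : ℕ, 1 ≤ i → i ≤ 3 → ∀ x, ‖iteratedFDeriv ℝ i L₂ x‖ ≤ K)
    (θ₀ : EuclideanSpace ℝ (Fin n))
    (θ₁' θ₂' : ℝ → EuclideanSpace ℝ (Fin n))
    (hθ₁' : ∀ h : ℝ, θ₁' h = θ₀ - h • gradient L₂ θ₀)
    (hθ₂' : ∀ h : ℝ, θ₂' h = θ₁' h - h • gradient L₁ (θ₁' h))
    (Lmod : ℝ → EuclideanSpace ℝ (Fin n) → ℝ)
    (hLmod : ∀ h : ℝ, ∀ θ : EuclideanSpace ℝ (Fin n),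
      Lmod h θ = L₁ θ + L₂ θ + (h / 4) * ‖gradient L₁ θ‖ ^ 2
        + (h / 4) * ‖gradient L₂ θ‖ ^ 2)
    (θt : ℝ → ℝ → EuclideanSpace ℝ (Fin n))
    (hinit : ∀ h : ℝ, 0 < h → θt h 0 = θ₀)
    (hode : ∀ h : ℝ, 0 < h → ∀ t ∈ Icc (0 : ℝ) h,
      HasDerivAt (θt h)
        (-(gradient (Lmod h) (θt h t))
          - (h / 2) • lieBracket
              (fun x => gradient L₁ x) (fun x => gradient L₂ x) (θt h t)) t) :
    ∃ C > (0 : ℝ), ∃ h₀ > (0 : ℝ), ∀ h ∈ Ioo (0 : ℝ) h₀,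
      ‖θt h h - θ₂' h‖ ≤ C * h ^ 3 := by
  obtain ⟨d1, b1, db1, l1, s1⟩ := grad_props L₁ hL₁ K hb₁
  obtain ⟨d2, b2, db2, l2, s2⟩ := grad_props L₂ hL₂ K hb₂
  have hK : 0 ≤ K := (norm_nonneg _).trans (b1 θ₀)
  have hgm := fun h => grad_mod L₁ L₂ (Lmod h) h (hL₁.differentiable (by norm_num))
    (hL₂.differentiable (by norm_num)) d1 d2 s1 s2 (hLmod h)
  generalize gradient L₁ = g₁ at *
  generalize gradient L₂ = g₂ at *
  let G : EuclideanSpace ℝ (Fin n) → EuclideanSpace ℝ (Fin n) := fun x => g₁ x + g₂ x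
  let B : EuclideanSpace ℝ (Fin n) → EuclideanSpace ℝ (Fin n) := fun x =>
    fderiv ℝ g₁ x (g₁ x) + fderiv ℝ g₂ x (g₂ x) + fderiv ℝ g₂ x (g₁ x) - fderiv ℝ g₁ x (g₂ x)
  let A := fderiv ℝ g₁ θ₀ + fderiv ℝ g₂ θ₀
  let P := 2 * K
  let Q := 8 * K ^ 2
  have hP : 0 ≤ P := by positivity
  have hQ : 0 ≤ Q := by positivity
  refine ⟨(P * (P + Q) ^ 2 + P * (P * (P + Q) + Q) + Q * (P + Q)) + K * K ^ 2 + 1,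
    by positivity, 1, one_pos, fun h hh => ?_⟩
  have h0 : 0 < h := hh.1
  have key := ode_expansion G B A P Q h hP hQ h0 hh.2.le θ₀ 
    (fun x => (norm_add_le _ _).trans (by have := b1 x; have := b2 x; simp only [P]; linarith))
    ((norm_add_le _ _).trans (by have := db1 θ₀; have := db2 θ₀; simp only [P]; linarith))
    (fun x => by
      have e : G x - G θ₀ = (g₁ x - g₁ θ₀) + (g₂ x - g₂ θ₀) := by simp only [G]; abel
      rw [e]
      refine (norm_add_le _ _).trans ?_
      have := lip_first g₁ K d1 db1 θ₀ x
      have := lip_first g₂ K d2 db2 θ₀ x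
      simp only [P]; linarith)
    (fun x => by
      have e : G x - G θ₀ - A (x - θ₀) = (g₁ x - g₁ θ₀ - fderiv ℝ g₁ θ₀ (x - θ₀)) 
          + (g₂ x - g₂ θ₀ - fderiv ℝ g₂ θ₀ (x - θ₀)) := by
        simp only [G, A, add_apply]; abel
      rw [e]
      refine (norm_add_le _ _).trans ?_
      have := taylor_quad g₁ K hK d1 l1 θ₀ x
      have := taylor_quad g₂ K hK d2 l2 θ₀ x
      simp only [P]; linarith)
    (fun x => by
      have c1 := bd_prod g₁ g₁ K b1 db1 x
      have c2 := bd_prod g₂ g₂ K b2 db2 x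
      have c3 := bd_prod g₂ g₁ K b1 db2 x
      have c4 := bd_prod g₁ g₂ K b2 db1 x
      refine (norm_sub_le _ _).trans ?_
      have := norm_add₃_le (a := fderiv ℝ g₁ x (g₁ x)) (b := fderiv ℝ g₂ x (g₂ x))
        (c := fderiv ℝ g₂ x (g₁ x))
      have := sq_nonneg K
      simp only [Q]; linarith)
    (fun x => by
      have c1 := lip_prod g₁ g₁ K hK d1 b1 db1 db1 l1 θ₀ x
      have c2 := lip_prod g₂ g₂ K hK d2 b2 db2 db2 l2 θ₀ x
      have c3 := lip_prod g₂ g₁ K hK d1 b1 db2 db1 l2 θ₀ x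
      have c4 := lip_prod g₁ g₂ K hK d2 b2 db1 db2 l1 θ₀ x
      have e : B x - B θ₀ = (fderiv ℝ g₁ x (g₁ x) - fderiv ℝ g₁ θ₀ (g₁ θ₀))
        + (fderiv ℝ g₂ x (g₂ x) - fderiv ℝ g₂ θ₀ (g₂ θ₀))
        + (fderiv ℝ g₂ x (g₁ x) - fderiv ℝ g₂ θ₀ (g₁ θ₀))
        - (fderiv ℝ g₁ x (g₂ x) - fderiv ℝ g₁ θ₀ (g₂ θ₀)) := by simp only [B]; abel
      rw [e]
      refine (norm_sub_le _ _).trans ?_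
      have := norm_add₃_le (a := fderiv ℝ g₁ x (g₁ x) - fderiv ℝ g₁ θ₀ (g₁ θ₀))
        (b := fderiv ℝ g₂ x (g₂ x) - fderiv ℝ g₂ θ₀ (g₂ θ₀))
        (c := fderiv ℝ g₂ x (g₁ x) - fderiv ℝ g₂ θ₀ (g₁ θ₀))
      simp only [Q]; linarith)
    (θt h) (hinit h h0) (fun t ht => by
      refine (hode h h0 t ht).congr_deriv ?_
      rw [hgm h]
      simp only [lieBracket, G, B]
      module)
  have tay := taylor_quad g₁ K hK d1 l1 θ₀ (θ₁' h)
  have hx : θ₁' h - θ₀ = -(h • g₂ θ₀) := by rw [hθ₁']; abel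
  have nx : ‖θ₁' h - θ₀‖ ≤ h * K := by
    rw [hx, norm_neg, norm_smul, Real.norm_of_nonneg h0.le]
    gcongr
    exact b2 _
  have e : θt h h - θ₂' h = 
      (θt h h - (θ₀ - h • G θ₀ + (h ^ 2 / 2) • A (G θ₀) - (h ^ 2 / 2) • B θ₀))
      + h • (g₁ (θ₁' h) - g₁ θ₀ - fderiv ℝ g₁ θ₀ (θ₁' h - θ₀)) := by
    rw [hx, hθ₂' h]
    generalize g₁ (θ₁' h) = w
    rw [hθ₁']
    simp only [G, A, B, add_apply, map_add, map_neg, map_smul]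
    module
  rw [e]
  have f1 : ‖h • (g₁ (θ₁' h) - g₁ θ₀ - fderiv ℝ g₁ θ₀ (θ₁' h - θ₀))‖ ≤ h * (K * (h * K) ^ 2) := by
    rw [norm_smul, Real.norm_of_nonneg h0.le]
    gcongr
    exact tay.trans (by gcongr)
  refine (norm_add_le _ _).trans ?_
  have : 0 ≤ h ^ 3 := by positivity
  nlinarith
end
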